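/- arXiv:1704.03122 — 2 statements merged into one kernel-verified Lean document; each statement's English description precedes it below -/
import Mathlib

section
/- Let n ≥ 5 and let G be a connected simple graph on n vertices such that the multiplicity of the largest distance Laplacian eigenvalue of G equals n−3. If H is any connected simple graph on n vertices whose distance Laplacian matrix has the same multiset of eigenvalues as that of G, then H is isomorphic to G. -/
open Matrix

/-- The distance Laplacian matrix of a graph: diagonal entries are the transmissions
`Tr(v) = ∑ u, d(v,u)`, off-diagonal entries are `-d(u,v)`. -/
noncomputable def distLaplacian {V : Type*} [Fintype V] [DecidableEq V]
    (G : SimpleGraph V) : Matrix V V ℝ :=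
  Matrix.of fun i j => if i = j then ∑ k : V, (G.dist i k : ℝ) else -(G.dist i j : ℝ)

/-- The multiplicity of `μ` as an eigenvalue of `M`, i.e. the dimension of the
corresponding eigenspace. -/
noncomputable def eigMult {V : Type*} [Fintype V] (M : Matrix V V ℝ) (μ : ℝ) : ℕ :=
  Module.finrank ℝ (Module.End.eigenspace M.mulVecLin μ)

/-- The largest eigenvalue of a matrix. -/
noncomputable def lambdaMax {V : Type*} [Fintype V] (M : Matrix V V ℝ) : ℝ :=
  sSup {μ : ℝ | Module.End.HasEigenvalue M.mulVecLin μ}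

/-- The transmission of a vertex. -/
noncomputable def transmission {V : Type*} [Fintype V] (G : SimpleGraph V) (v : V) : ℕ :=
  ∑ u : V, G.dist v u


/-! ## Part 1: spectral part -/

/-- Planar representation of the distances of `G`. -/
structure PlaneRep {n : ℕ} (G : SimpleGraph (Fin n)) (c : ℝ) (p q : Fin n → ℝ) : Prop where
  sp : ∑ i, p i = 0
  sq : ∑ i, q i = 0
  dist : ∀ i j, i ≠ j → (G.dist i j : ℝ) = c + p i * p j + q i * q j
  ind : ∀ α β : ℝ, (∀ i, α * p i + β * q i = 0) → α = 0 ∧ β = 0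

lemma distLaplacian_isHermitian {n : ℕ} (G : SimpleGraph (Fin n)) :
    (distLaplacian G).IsHermitian := by
  ext i j
  simp only [distLaplacian, Matrix.conjTranspose_apply, Matrix.of_apply, star_trivial]
  by_cases h : i = j
  · subst h; simp
  · rw [if_neg h, if_neg (Ne.symm h), SimpleGraph.dist_comm]

lemma distLaplacian_mulVec {n : ℕ} (G : SimpleGraph (Fin n)) (x : Fin n → ℝ) (i : Fin n) :
    (distLaplacian G *ᵥ x) i = (∑ k, (G.dist i k : ℝ)) * x i - ∑ k, (G.dist i k : ℝ) * x k := by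
  have h : ∀ k, distLaplacian G i k * x k =
      (if i = k then (∑ k, (G.dist i k : ℝ)) * x k else 0) - (G.dist i k : ℝ) * x k := by
    intro k
    simp only [distLaplacian, Matrix.of_apply]
    split_ifs with h
    · subst h; simp
    · ring
  simp only [Matrix.mulVec, dotProduct, h, Finset.sum_sub_distrib, Finset.sum_ite_eq,
    Finset.mem_univ, if_true]

lemma distLaplacian_mulVec_const {n : ℕ} (G : SimpleGraph (Fin n)) (a : ℝ) :
    distLaplacian G *ᵥ (fun _ => a) = 0 := by
  ext i
  rw [distLaplacian_mulVec, Finset.sum_mul]; simp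

lemma sum_distLaplacian_mulVec {n : ℕ} (G : SimpleGraph (Fin n)) (x : Fin n → ℝ) :
    ∑ i, (distLaplacian G *ᵥ x) i = 0 := by
  simp only [distLaplacian_mulVec, Finset.sum_sub_distrib, Finset.sum_mul]
  rw [Finset.sum_comm (f := fun i k => (G.dist i k : ℝ) * x i)]
  simp_rw [SimpleGraph.dist_comm (G := G)]
  simp

lemma eigMult_eq_of_charpoly {n : ℕ} {A B : Matrix (Fin n) (Fin n) ℝ} (hA : A.IsHermitian)
    (hB : B.IsHermitian) (h : A.charpoly = B.charpoly) (μ : ℝ) : eigMult A μ = eigMult B μ := by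
  have key : ∀ C : Matrix (Fin n) (Fin n) ℝ,
      eigMult C μ = n - (C - Matrix.scalar (Fin n) μ).rank := by
    intro C
    have h1 := LinearMap.finrank_range_add_finrank_ker (C - Matrix.scalar (Fin n) μ).mulVecLin
    have h2 : Module.End.eigenspace C.mulVecLin μ =
        LinearMap.ker (C - Matrix.scalar (Fin n) μ).mulVecLin := by
      ext x
      rw [Module.End.mem_eigenspace_iff, LinearMap.mem_ker]
      simp only [Matrix.mulVecLin_apply, Matrix.sub_mulVec]
      rw [sub_eq_zero]
      have : Matrix.scalar (Fin n) μ *ᵥ x = μ • x := by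
        ext i; simp [Matrix.mulVec_diagonal]
      rw [this]
    simp only [Module.finrank_fintype_fun_eq_card, Fintype.card_fin] at h1
    rw [eigMult, h2, Matrix.rank]
    omega
  have hs : ∀ C : Matrix (Fin n) (Fin n) ℝ, C.IsHermitian →
      (C - Matrix.scalar (Fin n) μ).IsHermitian := by
    intro C hC
    apply hC.sub
    ext i j
    simp [Matrix.diagonal_apply, eq_comm]
  have hc : (A - Matrix.scalar (Fin n) μ).charpoly = (B - Matrix.scalar (Fin n) μ).charpoly := by
    rw [Matrix.charpoly_sub_scalar, Matrix.charpoly_sub_scalar, h]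
  rw [key, key, (hs A hA).rank_eq_card_non_zero_eigs, (hs B hB).rank_eq_card_non_zero_eigs]
  simp only [((hs A hA).eigenvalues_eq_eigenvalues_iff (hs B hB)).2 hc]

lemma charpoly_eq_of_roots {n : ℕ} {A B : Matrix (Fin n) (Fin n) ℝ} (hA : A.IsHermitian)
    (hB : B.IsHermitian) (h : A.charpoly.roots = B.charpoly.roots) : A.charpoly = B.charpoly := by
  rw [(hA.splits_charpoly).eq_prod_roots_of_monic (Matrix.charpoly_monic A),
    (hB.splits_charpoly).eq_prod_roots_of_monic (Matrix.charpoly_monic B), h]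

lemma lambdaMax_eq_of_charpoly {n : ℕ} {A B : Matrix (Fin n) (Fin n) ℝ}
    (h : A.charpoly = B.charpoly) : lambdaMax A = lambdaMax B := by
  unfold lambdaMax
  congr 1
  ext μ
  simp only [Set.mem_ofPred_eq, Module.End.hasEigenvalue_iff_isRoot_charpoly,
    Matrix.charpoly_mulVecLin, h]

lemma le_lambdaMax {n : ℕ} {A : Matrix (Fin n) (Fin n) ℝ} {μ : ℝ} {x : Fin n → ℝ} (hx : x ≠ 0)
    (h : A *ᵥ x = μ • x) : μ ≤ lambdaMax A := by
  apply le_csSup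
  · exact (Module.End.finite_hasEigenvalue A.mulVecLin).bddAbove
  · apply Module.End.hasEigenvalue_of_hasEigenvector (x := x)
    exact Module.End.hasEigenvector_iff.2 ⟨Module.End.mem_eigenspace_iff.2 (by simpa using h), hx⟩

lemma eigvec_ne_zero {n : ℕ} {A : Matrix (Fin n) (Fin n) ℝ} (hA : A.IsHermitian) (i : Fin n) :
    (⇑(hA.eigenvectorBasis i) : Fin n → ℝ) ≠ 0 := by
  intro h
  have := hA.eigenvectorBasis.orthonormal.1 i
  have h0 : hA.eigenvectorBasis i = 0 := by
    ext k; exact congrFun h k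
  rw [h0] at this
  simp at this

lemma lambdaMax_pos {n : ℕ} (hn : 5 ≤ n) (G : SimpleGraph (Fin n)) (hG : G.Connected) :
    0 < lambdaMax (distLaplacian G) := by
  have hA := distLaplacian_isHermitian G
  by_contra hneg
  have h1 : ∀ i, hA.eigenvalues i ≤ 0 := fun i =>
    (le_lambdaMax (eigvec_ne_zero hA i) (hA.mulVec_eigenvectorBasis i)).trans (not_lt.1 hneg)
  have h2 := hA.trace_eq_sum_eigenvalues
  have h3 : (distLaplacian G).trace ≤ 0 := by
    rw [h2]; exact Finset.sum_nonpos (fun i _ => by simpa using h1 i)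
  have h4 : 0 < (distLaplacian G).trace := by
    simp only [Matrix.trace, Matrix.diag, distLaplacian, Matrix.of_apply, if_true]
    apply Finset.sum_pos
    · intro i _
      obtain ⟨j, hj⟩ : ∃ j : Fin n, j ≠ i := by
        have : Nontrivial (Fin n) := Fin.nontrivial_iff_two_le.2 (by omega)
        exact exists_ne i
      apply Finset.sum_pos' (fun _ _ => by positivity)
      exact ⟨j, Finset.mem_univ _, by exact_mod_cast hG.pos_dist_of_ne (Ne.symm hj)⟩
    · exact ⟨⟨0, by omega⟩, Finset.mem_univ _⟩
  linarith

lemma hermitian_entry {n : ℕ} {A : Matrix (Fin n) (Fin n) ℝ} (hA : A.IsHermitian) (a b : Fin n) :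
    A a b = ∑ k, hA.eigenvalues k * hA.eigenvectorBasis k a * hA.eigenvectorBasis k b := by
  conv_lhs => rw [hA.spectral_theorem]
  rw [Unitary.conjStarAlgAut_apply, Matrix.mul_apply]
  apply Finset.sum_congr rfl
  intro k _
  rw [Matrix.mul_diagonal]
  simp only [Matrix.star_apply, star_trivial, Matrix.IsHermitian.eigenvectorUnitary_apply,
    Function.comp_apply, RCLike.ofReal_real_eq_id, id_eq]
  ring

lemma exists_rep {n : ℕ} (hn : 5 ≤ n) (G : SimpleGraph (Fin n)) (hG : G.Connected)
    (hmult : eigMult (distLaplacian G) (lambdaMax (distLaplacian G)) = n - 3) :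
    ∃ p q, PlaneRep G (lambdaMax (distLaplacian G) / n) p q := by
  have hpos := lambdaMax_pos hn G hG
  have hub : ∀ (μ : ℝ) (x : Fin n → ℝ), x ≠ 0 → distLaplacian G *ᵥ x = μ • x →
    μ ≤ lambdaMax (distLaplacian G) := fun μ x hx h => le_lambdaMax hx h
  have hA := distLaplacian_isHermitian G
  generalize lambdaMax (distLaplacian G) = l at *
  have hn0 : (n : ℝ) ≠ 0 := by positivity
  set P : Matrix (Fin n) (Fin n) ℝ :=
    Matrix.scalar (Fin n) l - distLaplacian G - Matrix.of (fun _ _ => l / n) with hPdef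
  have hP : P.IsHermitian := by
    apply Matrix.IsHermitian.sub
    · apply Matrix.IsHermitian.sub _ hA
      ext i j
      simp [Matrix.diagonal_apply, eq_comm]
    · ext i j; simp
  have hPv : ∀ x : Fin n → ℝ, P *ᵥ x = l • x - distLaplacian G *ᵥ x - fun _ => l / n * ∑ k, x k := by
    intro x
    rw [hPdef, Matrix.sub_mulVec, Matrix.sub_mulVec]
    congr 1
    · congr 1
      ext i; simp [Matrix.mulVec_diagonal]
    · ext i; simp [Matrix.mulVec, dotProduct, Finset.mul_sum]
  have hP1 : ∀ a : ℝ, P *ᵥ (fun _ => a) = 0 := by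
    intro a
    rw [hPv, distLaplacian_mulVec_const]
    ext i; simp; field_simp; simp
  have hsumP : ∀ x : Fin n → ℝ, ∑ i, (P *ᵥ x) i = 0 := by
    intro x
    have := sum_distLaplacian_mulVec G x
    rw [hPv]
    simp only [Pi.sub_apply, Pi.smul_apply, smul_eq_mul, Finset.sum_sub_distrib, this,
      ← Finset.mul_sum]
    simp; field_simp; simp
  set E := Module.End.eigenspace (distLaplacian G).mulVecLin l with hE
  have hker : LinearMap.ker P.mulVecLin = E ⊔ Submodule.span ℝ {fun _ => (1 : ℝ)} := by
    apply le_antisymm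
    · intro x hx
      rw [LinearMap.mem_ker, Matrix.mulVecLin_apply] at hx
      rw [Submodule.mem_sup]
      set a : ℝ := (∑ k, x k) / n with ha
      refine ⟨x - (fun _ => a), ?_, fun _ => a, ?_, by simp⟩
      · rw [hE, Module.End.mem_eigenspace_iff, Matrix.mulVecLin_apply, Matrix.mulVec_sub,
          distLaplacian_mulVec_const, sub_zero]
        have := hPv (x - fun _ => a)
        rw [Matrix.mulVec_sub, hx, hP1, Matrix.mulVec_sub, distLaplacian_mulVec_const] at this
        ext i
        have h2 := congrFun this i
        simp [ha] at h2 ⊢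
        field_simp at h2 ⊢
        linarith
      · rw [Submodule.mem_span_singleton]
        exact ⟨a, by ext; simp⟩
    · apply sup_le
      · intro x hx
        rw [hE, Module.End.mem_eigenspace_iff, Matrix.mulVecLin_apply] at hx
        rw [LinearMap.mem_ker, Matrix.mulVecLin_apply, hPv, hx]
        have := sum_distLaplacian_mulVec G x
        rw [hx] at this
        simp only [Pi.smul_apply, smul_eq_mul, ← Finset.mul_sum] at this
        have h0 : ∑ k, x k = 0 := by
          rcases mul_eq_zero.1 this with h | h
          · linarith
          · exact h
        ext i; simp [h0]
      · rw [Submodule.span_singleton_le_iff_mem, LinearMap.mem_ker, Matrix.mulVecLin_apply, hP1]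
  have hdis : Disjoint E (Submodule.span ℝ {fun _ => (1 : ℝ)}) := by
    rw [Submodule.disjoint_span_singleton' (by
      intro h; have := congrFun h ⟨0, by omega⟩; simp at this)]
    intro h
    rw [hE, Module.End.mem_eigenspace_iff, Matrix.mulVecLin_apply, distLaplacian_mulVec_const] at h
    have := congrFun h ⟨0, by omega⟩
    simp at this; linarith
  have hrank : P.rank = 2 := by
    have h1 := LinearMap.finrank_range_add_finrank_ker P.mulVecLin
    have h2 := Submodule.finrank_sup_add_finrank_inf_eq E (Submodule.span ℝ {fun _ => (1 : ℝ)})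
    rw [hdis.eq_bot, ← hker, finrank_bot, finrank_span_singleton (by
      intro h; have := congrFun h ⟨0, by omega⟩; simp at this)] at h2
    have h3 : Module.finrank ℝ E = n - 3 := hmult
    simp only [Module.finrank_fintype_fun_eq_card, Fintype.card_fin] at h1
    rw [Matrix.rank]
    omega
  rw [hP.rank_eq_card_non_zero_eigs, Fintype.card_subtype, Finset.card_eq_two] at hrank
  obtain ⟨i, j, hij, hset⟩ := hrank
  have hmem : ∀ k, hP.eigenvalues k ≠ 0 ↔ k = i ∨ k = j := by
    intro k
    have := Finset.ext_iff.1 hset k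
    simpa using this
  have hei : 0 < hP.eigenvalues i ∧ 0 < hP.eigenvalues j := by
    have : ∀ k, hP.eigenvalues k ≠ 0 → 0 < hP.eigenvalues k := by
      intro k hk
      have h1 := hP.mulVec_eigenvectorBasis k
      have h2 := hsumP (hP.eigenvectorBasis k)
      rw [h1] at h2
      simp only [Pi.smul_apply, smul_eq_mul, ← Finset.mul_sum] at h2
      have h0 := (mul_eq_zero.1 h2).resolve_left hk
      have h3 := hub (l - hP.eigenvalues k) _ (eigvec_ne_zero hP k) (by
        rw [hPv, h0] at h1
        ext s
        have := congrFun h1 s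
        simp at this ⊢
        linarith)
      exact lt_of_le_of_ne (by linarith) (Ne.symm hk)
    exact ⟨this i ((hmem i).2 (Or.inl rfl)), this j ((hmem j).2 (Or.inr rfl))⟩
  have hent : ∀ a b, P a b = hP.eigenvalues i * hP.eigenvectorBasis i a * hP.eigenvectorBasis i b +
      hP.eigenvalues j * hP.eigenvectorBasis j a * hP.eigenvectorBasis j b := by
    intro a b
    rw [hermitian_entry hP, ← Finset.sum_subset (Finset.subset_univ {i, j}), Finset.sum_pair hij]
    intro k _ hk
    have : hP.eigenvalues k = 0 := by
      by_contra h
      apply hk; simpa using (hmem k).1 h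
    simp [this]
  have hsumv : ∀ k, hP.eigenvalues k ≠ 0 → ∑ s, hP.eigenvectorBasis k s = 0 := by
    intro k hk
    have h1 := hP.mulVec_eigenvectorBasis k
    have h2 := hsumP (hP.eigenvectorBasis k)
    rw [h1] at h2
    simp only [Pi.smul_apply, smul_eq_mul, ← Finset.mul_sum] at h2
    exact (mul_eq_zero.1 h2).resolve_left hk
  refine ⟨fun a => √(hP.eigenvalues i) * hP.eigenvectorBasis i a,
    fun a => √(hP.eigenvalues j) * hP.eigenvectorBasis j a, ?_, ?_, ?_, ?_⟩
  · rw [← Finset.mul_sum, hsumv i hei.1.ne', mul_zero]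
  · rw [← Finset.mul_sum, hsumv j hei.2.ne', mul_zero]
  · intro a b hab
    have h1 := hent a b
    have h2 : P a b = G.dist a b - l / n := by
      simp [hPdef, distLaplacian, hab]
    have h3 := Real.mul_self_sqrt hei.1.le
    have h4 := Real.mul_self_sqrt hei.2.le
    rw [h2] at h1
    rw [← h3, ← h4] at h1
    linear_combination h1
  · intro α β h
    have hi : ∀ s, α * √(hP.eigenvalues i) * hP.eigenvectorBasis i s +
      β * √(hP.eigenvalues j) * hP.eigenvectorBasis j s = 0 := fun s => by
        have := h s; linear_combination this
    have hv : (α * √(hP.eigenvalues i)) • hP.eigenvectorBasis i +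
      (β * √(hP.eigenvalues j)) • hP.eigenvectorBasis j = 0 := by
      ext s; simpa using hi s
    have hli := hP.eigenvectorBasis.orthonormal.linearIndependent
    have hpair : LinearIndependent ℝ ![hP.eigenvectorBasis i, hP.eigenvectorBasis j] := by
      have := hli.comp ![i, j] (by
        intro a b hab
        fin_cases a <;> fin_cases b <;> simp_all)
      have e : ![hP.eigenvectorBasis i, hP.eigenvectorBasis j] =
          ⇑hP.eigenvectorBasis ∘ ![i, j] := by
        funext a; fin_cases a <;> rfl
      rw [e]; exact this
    have := LinearIndependent.pair_iff.1 hpair _ _ hv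
    have s1 := (Real.sqrt_pos.2 hei.1).ne'
    have s2 := (Real.sqrt_pos.2 hei.2).ne'
    exact ⟨(mul_eq_zero.1 this.1).resolve_right s1, (mul_eq_zero.1 this.2).resolve_right s2⟩

/-! ## Part 2: basic facts about planar representations -/

lemma kernel4 {n : ℕ} (p q : Fin n → ℝ) (a b e d : Fin n) :
    ∃ z1 z2 z3 z4 : ℝ, ¬ (z1 = 0 ∧ z2 = 0 ∧ z3 = 0 ∧ z4 = 0) ∧ z1 + z2 + z3 + z4 = 0 ∧
      z1 * p a + z2 * p b + z3 * p e + z4 * p d = 0 ∧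
      z1 * q a + z2 * q b + z3 * q e + z4 * q d = 0 := by
  let A : Matrix (Fin 3) (Fin 4) ℝ :=
    !![1, 1, 1, 1; p a, p b, p e, p d; q a, q b, q e, q d]
  have h : LinearMap.ker A.mulVecLin ≠ ⊥ := by
    apply LinearMap.ker_ne_bot_of_finrank_lt
    simp
  obtain ⟨z, hz, hz0⟩ := Submodule.exists_mem_ne_zero_of_ne_bot h
  rw [LinearMap.mem_ker, Matrix.mulVecLin_apply] at hz
  refine ⟨z 0, z 1, z 2, z 3, ?_, ?_, ?_, ?_⟩
  · rintro ⟨h1, h2, h3, h4⟩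
    apply hz0
    ext i
    fin_cases i <;> simp [h1, h2, h3, h4]
  · have := congrFun hz 0
    simpa [A, Matrix.mulVec, dotProduct, Fin.sum_univ_four] using this
  · have := congrFun hz 1
    simp [A, Matrix.mulVec, dotProduct, Fin.sum_univ_four] at this
    linarith
  · have := congrFun hz 2
    simp [A, Matrix.mulVec, dotProduct, Fin.sum_univ_four] at this
    linarith

/-- The Gram entries `c + ⟨x_i, x_j⟩`. -/
def gramM {n : ℕ} (c : ℝ) (p q : Fin n → ℝ) (i j : Fin n) : ℝ := c + p i * p j + q i * q j

lemma gram_comm {n : ℕ} (c : ℝ) (p q : Fin n → ℝ) (i j : Fin n) :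
    gramM c p q i j = gramM c p q j i := by unfold gramM; ring

lemma kernelM {n : ℕ} (c : ℝ) (p q : Fin n → ℝ) (a b e d : Fin n) :
    ∃ z1 z2 z3 z4 : ℝ, ¬ (z1 = 0 ∧ z2 = 0 ∧ z3 = 0 ∧ z4 = 0) ∧ z1 + z2 + z3 + z4 = 0 ∧
      ∀ v, z1 * gramM c p q v a + z2 * gramM c p q v b + z3 * gramM c p q v e +
        z4 * gramM c p q v d = 0 := by
  obtain ⟨z1, z2, z3, z4, h0, h1, h2, h3⟩ := kernel4 p q a b e d
  refine ⟨z1, z2, z3, z4, h0, h1, fun v => ?_⟩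
  unfold gramM
  linear_combination c * h1 + p v * h2 + q v * h3

section
variable {n : ℕ} {G : SimpleGraph (Fin n)} {c : ℝ} {p q : Fin n → ℝ}

lemma PlaneRep.gram_eq (R : PlaneRep G c p q) {i j : Fin n} (h : i ≠ j) :
    gramM c p q i j = G.dist i j := (R.dist i j h).symm

lemma PlaneRep.row (R : PlaneRep G c p q) (i : Fin n) :
    ∑ j, (G.dist i j : ℝ) = n * c - gramM c p q i i := by
  have h : ∀ j, (G.dist i j : ℝ) = (c + p i * p j + q i * q j) -
      (if i = j then gramM c p q i i else 0) := by
    intro j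
    by_cases h : i = j
    · subst h; simp [gramM]
    · simp [h, R.dist i j h]
  rw [Finset.sum_congr rfl (fun j _ => h j)]
  simp only [Finset.sum_sub_distrib, Finset.sum_add_distrib, ← Finset.mul_sum, R.sp, R.sq,
    Finset.sum_ite_eq, Finset.mem_univ, if_true]
  simp

lemma PlaneRep.one_lt (R : PlaneRep G c p q) (hn : 5 ≤ n) (hG : G.Connected) : 1 < c := by
  have h1 : ∑ i, ∑ j, (G.dist i j : ℝ) = n * n * c - ∑ i, gramM c p q i i := by
    simp only [R.row, Finset.sum_sub_distrib]
    simp; ring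
  have h2 : n * c < ∑ i, gramM c p q i i := by
    have : ∑ i, gramM c p q i i = n * c + ∑ i, (p i ^ 2 + q i ^ 2) := by
      have : ∀ i, gramM c p q i i = c + (p i ^ 2 + q i ^ 2) := fun i => by unfold gramM; ring
      simp only [this, Finset.sum_add_distrib]
      simp
    rw [this]
    have : 0 < ∑ i, (p i ^ 2 + q i ^ 2) := by
      rw [Finset.sum_pos_iff_of_nonneg (fun i _ => by positivity)]
      by_contra hcon
      push Not at hcon
      have := R.ind 1 0 (fun i => by
        have := hcon i (Finset.mem_univ _)
        have : p i = 0 := by nlinarith [sq_nonneg (p i), sq_nonneg (q i)]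
        simp [this])
      simp at this
    linarith
  have h3 : (n : ℝ) * (n - 1) ≤ ∑ i, ∑ j, (G.dist i j : ℝ) := by
    have : ∀ i, ((n : ℝ) - 1) ≤ ∑ j, (G.dist i j : ℝ) := by
      intro i
      have h : ∑ j, ((1 : ℝ) - if i = j then 1 else 0) ≤ ∑ j, (G.dist i j : ℝ) := by
        apply Finset.sum_le_sum
        intro j _
        by_cases h : i = j
        · simp [h]
        · have := hG.pos_dist_of_ne h
          simp only [h, if_false, sub_zero]
          exact_mod_cast this
      simpa using h
    calc (n : ℝ) * (n - 1) = ∑ i : Fin n, ((n : ℝ) - 1) := by simp; ring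
      _ ≤ _ := Finset.sum_le_sum (fun i _ => this i)
  have hn' : (5 : ℝ) ≤ n := by exact_mod_cast hn
  have h4 : (n : ℝ) * (n - 1) < n * (n - 1) * c := by nlinarith
  have h5 : 0 < (n : ℝ) * (n - 1) := by nlinarith
  nlinarith

lemma exists_nbr (hn : 5 ≤ n) (hG : G.Connected) (i : Fin n) : ∃ j, G.Adj i j := by
  have : Nontrivial (Fin n) := Fin.nontrivial_iff_two_le.2 (by omega)
  exact hG.preconnected.exists_adj_of_nontrivial i

lemma PlaneRep.norm_pos (R : PlaneRep G c p q) (hn : 5 ≤ n) (hG : G.Connected) (i : Fin n) :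
    0 < p i ^ 2 + q i ^ 2 := by
  by_contra h
  have hp : p i = 0 := by nlinarith [sq_nonneg (p i), sq_nonneg (q i)]
  have hq : q i = 0 := by nlinarith [sq_nonneg (p i), sq_nonneg (q i)]
  obtain ⟨j, hj⟩ := exists_nbr hn hG i
  have h1 := R.dist i j hj.ne
  rw [SimpleGraph.dist_eq_one_iff_adj.2 hj, hp, hq] at h1
  have := R.one_lt hn hG
  simp at h1
  linarith

lemma PlaneRep.lt_gram (R : PlaneRep G c p q) (hn : 5 ≤ n) (hG : G.Connected) (i : Fin n) :
    c < gramM c p q i i := by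
  have := R.norm_pos hn hG i
  unfold gramM; nlinarith

end

/-! ## Part 3: the diameter is at most two -/

lemma p4_core {u t2 t3 v z1 z2 z3 z4 : ℝ} (hu : 1 < u) (ht2 : 1 < t2) (ht3 : 1 < t3) (hv : 1 < v)
    (hz : ¬ (z1 = 0 ∧ z2 = 0 ∧ z3 = 0 ∧ z4 = 0)) (hs : z1 + z2 + z3 + z4 = 0)
    (e1 : u * z1 + z2 + 2 * z3 + 3 * z4 = 0) (e2 : z1 + t2 * z2 + z3 + 2 * z4 = 0)
    (e3 : 2 * z1 + z2 + t3 * z3 + z4 = 0) (e4 : 3 * z1 + 2 * z2 + z3 + v * z4 = 0) :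
    2 < u ∧ 2 < v ∧ 0 < u * v - u - 2 * v ∧ 0 < u * v - 2 * u - v ∧
    t2 * (u * v - u - 2 * v) = (u - 2) * v ∧ t3 * (u * v - 2 * u - v) = u * (v - 2) ∧
    ∃ s, s ≠ 0 ∧ z1 = s * v ∧ z2 = s * (u * v - u - 2 * v) ∧ z3 = - s * (u * v - 2 * u - v) ∧
      z4 = - s * u := by
  have h14 : u * z1 + v * z4 = 0 := by linear_combination e1 + e4 - 3 * hs
  obtain ⟨s, hs1⟩ : ∃ s, z1 = s * v := ⟨z1 / v, by field_simp⟩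
  have hz4 : z4 = - s * u := by
    have : v * (z4 + s * u) = 0 := by rw [hs1] at h14; linear_combination h14
    rcases mul_eq_zero.1 this with h | h
    · linarith
    · linarith
  have hz3 : z3 = - s * (u * v - 2 * u - v) := by
    rw [hs1, hz4] at e1 hs; linear_combination e1 - hs
  have hz2 : z2 = s * (u * v - u - 2 * v) := by
    rw [hs1, hz4, hz3] at hs; linear_combination hs
  have hs0 : s ≠ 0 := by
    rintro rfl
    apply hz
    simp [hs1, hz4, hz3, hz2]
  have f2 : t2 * (u * v - u - 2 * v) = (u - 2) * v := by
    have : s * (t2 * (u * v - u - 2 * v) - (u - 2) * v) = 0 := by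
      rw [hs1, hz4, hz3, hz2] at e2; linear_combination e2
    linarith [(mul_eq_zero.1 this).resolve_left hs0]
  have f3 : t3 * (u * v - 2 * u - v) = u * (v - 2) := by
    have : s * (t3 * (u * v - 2 * u - v) - u * (v - 2)) = 0 := by
      rw [hs1, hz4, hz3, hz2] at e3; linear_combination - e3
    linarith [(mul_eq_zero.1 this).resolve_left hs0]
  have hw : 0 < u * v - u - 2 * v := by
    by_contra h
    nlinarith
  have hw' : 0 < u * v - 2 * u - v := by
    by_contra h
    nlinarith
  have hu2 : 2 < u := by
    by_contra h
    nlinarith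
  have hv2 : 2 < v := by
    by_contra h
    nlinarith
  exact ⟨hu2, hv2, hw, hw', f2, f3, s, hs0, hs1, hz2, hz3, hz4⟩

lemma p4_out {u v : ℝ} (hu : 2 < u) (hv : 2 < v) (hw : 0 < u * v - u - 2 * v)
    (hw' : 0 < u * v - 2 * u - v) (k1 k2 k3 k4 : ℕ) (h12 : k1 ≤ k2 + 1) (h21 : k2 ≤ k1 + 1)
    (h23 : k2 ≤ k3 + 1) (h32 : k3 ≤ k2 + 1) (h34 : k3 ≤ k4 + 1) (h43 : k4 ≤ k3 + 1)
    (h : v * k1 + (u * v - u - 2 * v) * k2 - (u * v - 2 * u - v) * k3 - u * k4 = (0 : ℝ)) :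
    (k1 = k2 ∧ k2 = k3 ∧ k3 = k4) ∨
    (u = v ∧ k2 = k3 ∧ k1 = k4 ∧ (k1 = k2 + 1 ∨ k2 = k1 + 1)) ∨
    (2 * (u + v) = u * v ∧ k1 = k3 ∧ k2 = k4) := by
  have c1 : k1 = k2 + 1 ∨ k1 = k2 ∨ k2 = k1 + 1 := by omega
  have c2 : k2 = k3 + 1 ∨ k2 = k3 ∨ k3 = k2 + 1 := by omega
  have c3 : k3 = k4 + 1 ∨ k3 = k4 ∨ k4 = k3 + 1 := by omega
  have d1 : (k1 : ℝ) - k2 = 1 ∧ k1 = k2 + 1 ∨ (k1 : ℝ) - k2 = 0 ∧ k1 = k2 ∨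
      (k1 : ℝ) - k2 = -1 ∧ k2 = k1 + 1 := by
    rcases c1 with h | h | h
    · left; refine ⟨?_, h⟩; rw [h]; push_cast; ring
    · right; left; refine ⟨?_, h⟩; rw [h]; ring
    · right; right; refine ⟨?_, h⟩; rw [h]; push_cast; ring
  have d2 : (k2 : ℝ) - k3 = 1 ∧ k2 = k3 + 1 ∨ (k2 : ℝ) - k3 = 0 ∧ k2 = k3 ∨
      (k2 : ℝ) - k3 = -1 ∧ k3 = k2 + 1 := by
    rcases c2 with h | h | h
    · left; refine ⟨?_, h⟩; rw [h]; push_cast; ring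
    · right; left; refine ⟨?_, h⟩; rw [h]; ring
    · right; right; refine ⟨?_, h⟩; rw [h]; push_cast; ring
  have d3 : (k3 : ℝ) - k4 = 1 ∧ k3 = k4 + 1 ∨ (k3 : ℝ) - k4 = 0 ∧ k3 = k4 ∨
      (k3 : ℝ) - k4 = -1 ∧ k4 = k3 + 1 := by
    rcases c3 with h | h | h
    · left; refine ⟨?_, h⟩; rw [h]; push_cast; ring
    · right; left; refine ⟨?_, h⟩; rw [h]; ring
    · right; right; refine ⟨?_, h⟩; rw [h]; push_cast; ring
  have h' : v * ((k1 : ℝ) - k2) + (u * v - u - v) * ((k2 : ℝ) - k3) + u * ((k3 : ℝ) - k4) = 0 := by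
    linear_combination h
  have hm : 4 < u * v := by nlinarith
  rcases d1 with ⟨r1, n1⟩ | ⟨r1, n1⟩ | ⟨r1, n1⟩ <;> rcases d2 with ⟨r2, n2⟩ | ⟨r2, n2⟩ | ⟨r2, n2⟩ <;>
    rcases d3 with ⟨r3, n3⟩ | ⟨r3, n3⟩ | ⟨r3, n3⟩ <;> rw [r1, r2, r3] at h' <;>
    first
    | (left; exact ⟨n1, n2, n3⟩)
    | (exfalso; nlinarith)
    | (right; left; exact ⟨by linarith, by omega, by omega, by omega⟩)
    | (right; right; exact ⟨by linarith, by omega, by omega⟩)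

lemma det2 {A B C D x y : ℝ} (h : ¬ (x = 0 ∧ y = 0)) (h1 : A * x + B * y = 0)
    (h2 : C * x + D * y = 0) : A * D - B * C = 0 := by
  by_contra hd
  apply h
  constructor
  · have : (A * D - B * C) * x = 0 := by linear_combination D * h1 - B * h2
    exact (mul_eq_zero.1 this).resolve_left hd
  · have : (A * D - B * C) * y = 0 := by linear_combination A * h2 - C * h1
    exact (mul_eq_zero.1 this).resolve_left hd

lemma p4_sym {u P Q w1 w2 w4 wk : ℝ}
    (hz : ¬ (w1 = 0 ∧ w2 = 0 ∧ w4 = 0 ∧ wk = 0)) (hs : w1 + w2 + w4 + wk = 0)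
    (ea : u * w1 + w2 + 3 * w4 + Q * wk = 0) (ee : 2 * w1 + w2 + w4 + P * wk = 0)
    (ed : 3 * w1 + 2 * w2 + u * w4 + Q * wk = 0) :
    Q * (4 - u) + P * (u * (u - 3)) = u ^ 2 - 4 * u + 6 := by
  have h2 : w2 = (u - 3) * (w1 - w4) := by linear_combination ed - ea
  have hk : wk = -(2 * w4 + (u - 2) * (w1 - w4)) := by linear_combination hs - h2
  have := det2 (x := w4) (y := w1 - w4) (A := 3 - 2 * P) (B := u - 1 - P * (u - 2))
    (C := u + 3 - 2 * Q) (D := 2 * u - 3 - Q * (u - 2)) (by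
      rintro ⟨r1, r2⟩
      apply hz
      rw [r2, r1] at hk
      rw [r2] at h2
      refine ⟨by linarith, by simpa using h2, r1, by simpa using hk⟩)
    (by rw [hk, h2] at ee; linear_combination ee) (by rw [hk, h2] at ea; linear_combination ea)
  linear_combination this

section
variable {n : ℕ} {G : SimpleGraph (Fin n)} {c : ℝ} {p q : Fin n → ℝ}

/-- If `x_k` has the same inner product with four points, these are collinear: there is an affine
dependency with last coefficient zero. -/
lemma equidist {a b e k : Fin n} (hk : 0 < p k ^ 2 + q k ^ 2)
    (h1 : gramM c p q k a = gramM c p q k b) (h2 : gramM c p q k b = gramM c p q k e) :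
    ∃ z1 z2 z3 : ℝ, ¬ (z1 = 0 ∧ z2 = 0 ∧ z3 = 0) ∧ z1 + z2 + z3 = 0 ∧
      ∀ v, z1 * gramM c p q v a + z2 * gramM c p q v b + z3 * gramM c p q v e = 0 := by
  unfold gramM at *
  have g1 : p k * (p a - p b) + q k * (q a - q b) = 0 := by linear_combination h1
  have g2 : p k * (p b - p e) + q k * (q b - q e) = 0 := by linear_combination h2
  have hcr : (p a - p b) * (q b - q e) - (q a - q b) * (p b - p e) = 0 := by
    refine det2 (x := p k) (y := q k) ?_ (by linear_combination g1) (by linear_combination g2)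
    rintro ⟨r1, r2⟩
    rw [r1, r2] at hk; norm_num at hk
  -- either the first difference vanishes or we use coordinates along it
  by_cases h0 : p a - p b = 0 ∧ q a - q b = 0
  · refine ⟨1, -1, 0, by norm_num, by norm_num, fun v => ?_⟩
    linear_combination p v * h0.1 + q v * h0.2
  · by_cases hp : p a - p b = 0
    · have hq : q a - q b ≠ 0 := fun h => h0 ⟨hp, h⟩
      have hpe : p b - p e = 0 := by
        rw [hp] at hcr
        have : (q a - q b) * (p b - p e) = 0 := by linarith
        exact (mul_eq_zero.1 this).resolve_left hq
      refine ⟨q b - q e, -(q b - q e) - (q a - q b), q a - q b, fun h => hq h.2.2, by ring,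
        fun v => ?_⟩
      linear_combination p v * (q b - q e) * hp - p v * (q a - q b) * hpe
    · refine ⟨p b - p e, -(p b - p e) - (p a - p b), p a - p b, fun h => hp h.2.2, by ring,
        fun v => ?_⟩
      linear_combination - q v * hcr

lemma exists_step (hG : G.Connected) {i j : Fin n} {m : ℕ} (h : G.dist i j = m + 1) :
    ∃ k, G.Adj i k ∧ G.dist k j = m := by
  obtain ⟨w, hw⟩ := hG.exists_walk_length_eq_dist i j
  cases w with
  | nil => simp at h
  | @cons _ k _ hadj w' =>
    refine ⟨k, hadj, ?_⟩
    have h1 := SimpleGraph.dist_le w'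
    have h2 := hG.dist_triangle (u := i) (v := k) (w := j)
    rw [SimpleGraph.dist_eq_one_iff_adj.2 hadj] at h2
    simp at hw
    omega

lemma exists_dist_three (hG : G.Connected) {j : Fin n} : ∀ (m : ℕ) (i : Fin n),
    G.dist i j = m + 3 → ∃ a, G.dist a j = 3 := by
  intro m
  induction m with
  | zero => intro i h; exact ⟨i, by simpa using h⟩
  | succ m ih =>
    intro i h
    obtain ⟨k, -, hk⟩ := exists_step hG (m := m + 3) (by omega : G.dist i j = m + 3 + 1)
    exact ih k hk

lemma exists_boundary (hG : G.Connected) (S : Finset (Fin n)) {a k : Fin n} (ha : a ∈ S)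
    (hk : k ∉ S) : ∃ x ∈ S, ∃ y ∉ S, G.Adj x y := by
  obtain ⟨w⟩ := hG.preconnected a k
  obtain ⟨d, -, h1, h2⟩ := w.exists_boundary_dart (S : Set (Fin n)) (by simpa using ha)
    (by simpa using hk)
  exact ⟨d.fst, by simpa using h1, d.snd, by simpa using h2, d.adj⟩

lemma exists_not_mem_four (hn : 5 ≤ n) (a b e d : Fin n) :
    ∃ k, k ∉ ({a, b, e, d} : Finset (Fin n)) := by
  by_contra h
  push Not at h
  have h1 : (Finset.univ : Finset (Fin n)) ⊆ {a, b, e, d} := fun x _ => h x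
  have h2 := Finset.card_le_card h1
  have h3 := Finset.card_le_four (a := a) (b := b) (c := e) (d := d)
  simp at h2
  omega

lemma PlaneRep.diam (R : PlaneRep G c p q) (hn : 5 ≤ n) (hG : G.Connected) (i j : Fin n) :
    G.dist i j ≤ 2 := by
  by_contra hcon
  obtain ⟨a, had⟩ := exists_dist_three hG (G.dist i j - 3) i (by omega : G.dist i j = _ + 3)
  generalize j = d at had
  obtain ⟨b, hab, hbd⟩ := exists_step hG (m := 2) had
  obtain ⟨e, hbe, hed⟩ := exists_step hG (m := 1) hbd
  have hab1 := SimpleGraph.dist_eq_one_iff_adj.2 hab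
  have hbe1 := SimpleGraph.dist_eq_one_iff_adj.2 hbe
  have hae : G.dist a e = 2 := by
    have h1 := hG.dist_triangle (u := a) (v := b) (w := e)
    have h2 := hG.dist_triangle (u := a) (v := e) (w := d)
    omega
  have nab : a ≠ b := hab.ne
  have nbe : b ≠ e := hbe.ne
  have nae : a ≠ e := by rintro rfl; simp at hae
  have nad : a ≠ d := by rintro rfl; simp at had
  have nbd : b ≠ d := by rintro rfl; simp at hbd
  have ned : e ≠ d := by rintro rfl; simp at hed
  have hc := R.one_lt hn hG
  have gab : gramM c p q a b = 1 := by rw [R.gram_eq nab, hab1]; simp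
  have gae : gramM c p q a e = 2 := by rw [R.gram_eq nae, hae]; simp
  have gad : gramM c p q a d = 3 := by rw [R.gram_eq nad, had]; simp
  have gbe : gramM c p q b e = 1 := by rw [R.gram_eq nbe, hbe1]; simp
  have gbd : gramM c p q b d = 2 := by rw [R.gram_eq nbd, hbd]; simp
  have ged : gramM c p q e d = 1 := by rw [R.gram_eq ned, hed]; simp
  have gba : gramM c p q b a = 1 := by rw [gram_comm]; exact gab
  have gea : gramM c p q e a = 2 := by rw [gram_comm]; exact gae
  have gda : gramM c p q d a = 3 := by rw [gram_comm]; exact gad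
  have geb : gramM c p q e b = 1 := by rw [gram_comm]; exact gbe
  have gdb : gramM c p q d b = 2 := by rw [gram_comm]; exact gbd
  have gde : gramM c p q d e = 1 := by rw [gram_comm]; exact ged
  have la := R.lt_gram hn hG a
  have lb := R.lt_gram hn hG b
  have le := R.lt_gram hn hG e
  have ld := R.lt_gram hn hG d
  have rowa := R.row a
  have rowb := R.row b
  have rowe := R.row e
  have rowd := R.row d
  -- every dependency on the path has the explicit form
  have core : ∀ z1 z2 z3 z4 : ℝ, ¬ (z1 = 0 ∧ z2 = 0 ∧ z3 = 0 ∧ z4 = 0) → z1 + z2 + z3 + z4 = 0 →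
      (∀ v, z1 * gramM c p q v a + z2 * gramM c p q v b + z3 * gramM c p q v e +
        z4 * gramM c p q v d = 0) → _ := fun z1 z2 z3 z4 h0 hs hv =>
    p4_core (u := gramM c p q a a) (t2 := gramM c p q b b) (t3 := gramM c p q e e)
      (v := gramM c p q d d) (by linarith) (by linarith) (by linarith) (by linarith) h0 hs
      (by have := hv a; rw [gab, gae, gad] at this; linear_combination this)
      (by have := hv b; rw [gba, gbe, gbd] at this; linear_combination this)
      (by have := hv e; rw [gea, geb, ged] at this; linear_combination this)
      (by have := hv d; rw [gda, gdb, gde] at this; linear_combination this)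
  obtain ⟨z1, z2, z3, z4, h0, hs, hv⟩ := kernelM c p q a b e d
  obtain ⟨hu, hvv, hw, hw', ft2, ft3, s, hs0, r1, r2, r3, r4⟩ := core z1 z2 z3 z4 h0 hs hv
  -- classification of outside vertices
  have out : ∀ k, k ∉ ({a, b, e, d} : Finset (Fin n)) →
      (gramM c p q a a = gramM c p q d d ∧ G.dist k b = G.dist k e ∧ G.dist k a = G.dist k d ∧
        (G.dist k a = G.dist k b + 1 ∨ G.dist k b = G.dist k a + 1)) ∨
      (2 * (gramM c p q a a + gramM c p q d d) = gramM c p q a a * gramM c p q d d ∧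
        G.dist k a = G.dist k e ∧ G.dist k b = G.dist k d) := by
    intro k hk
    simp only [Finset.mem_insert, Finset.mem_singleton, not_or] at hk
    obtain ⟨ka, kb, ke, kd⟩ := hk
    have hvk := hv k
    have eab := hG.dist_triangle (u := k) (v := a) (w := b)
    have eba := hG.dist_triangle (u := k) (v := b) (w := a)
    have ebe := hG.dist_triangle (u := k) (v := b) (w := e)
    have eeb := hG.dist_triangle (u := k) (v := e) (w := b)
    have eed := hG.dist_triangle (u := k) (v := e) (w := d)
    have ede := hG.dist_triangle (u := k) (v := d) (w := e)
    rw [SimpleGraph.dist_comm (u := b) (v := a)] at eba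
    rw [SimpleGraph.dist_comm (u := e) (v := b)] at eeb
    rw [SimpleGraph.dist_comm (u := d) (v := e)] at ede
    have gka := R.gram_eq ka
    have gkb := R.gram_eq kb
    have gke := R.gram_eq ke
    have gkd := R.gram_eq kd
    have key := p4_out hu hvv hw hw' (G.dist k a) (G.dist k b) (G.dist k e) (G.dist k d)
      (by omega) (by omega) (by omega) (by omega) (by omega) (by omega) (by
        rw [gka, gkb, gke, gkd, r1, r2, r3, r4] at hvk
        have : s * (gramM c p q d d * G.dist k a + (gramM c p q a a * gramM c p q d d -
          gramM c p q a a - 2 * gramM c p q d d) * G.dist k b - (gramM c p q a a * gramM c p q d d -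
          2 * gramM c p q a a - gramM c p q d d) * G.dist k e - gramM c p q a a * G.dist k d)
            = 0 := by
          linear_combination hvk
        exact (mul_eq_zero.1 this).resolve_left hs0)
    rcases key with ⟨q1, q2, q3⟩ | key | key
    · exfalso
      obtain ⟨y1, y2, y3, hy0, hys, hyv⟩ := equidist (c := c) (a := a) (b := b) (e := e)
        (R.norm_pos hn hG k) (by rw [gka, gkb, q1]) (by rw [gkb, gke, q2])
      obtain ⟨-, -, -, -, -, -, s', hs', -, -, -, r4'⟩ := core y1 y2 y3 0
        (fun h => hy0 ⟨h.1, h.2.1, h.2.2.1⟩) (by linarith) (fun v => by linarith [hyv v])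
      have : s' * gramM c p q a a = 0 := by linarith
      rcases mul_eq_zero.1 this with h | h
      · exact hs' h
      · linarith
    · exact Or.inl key
    · exact Or.inr key
  -- relation for symmetric outside vertices
  have sym : ∀ k, k ∉ ({a, b, e, d} : Finset (Fin n)) → gramM c p q a a = gramM c p q d d →
      G.dist k b = G.dist k e → G.dist k a = G.dist k d →
      (G.dist k a : ℝ) * (4 - gramM c p q a a) + G.dist k b * (gramM c p q a a *
        (gramM c p q a a - 3)) = gramM c p q a a ^ 2 - 4 * gramM c p q a a + 6 := by
    intro k hk huv h1 h2
    simp only [Finset.mem_insert, Finset.mem_singleton, not_or] at hk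
    obtain ⟨ka, kb, ke, kd⟩ := hk
    have gka := R.gram_eq ka
    have gkb := R.gram_eq kb
    have gke := R.gram_eq ke
    have gkd := R.gram_eq kd
    rw [gram_comm] at gka gkb gke gkd
    obtain ⟨w1, w2, w4, wk, hw0, hws, hwv⟩ := kernelM c p q a b d k
    refine p4_sym hw0 hws ?_ ?_ ?_
    · have := hwv a; rw [gab, gad, gka] at this; linear_combination this
    · have := hwv e; rw [gea, geb, ged, gke, ← h1] at this; linear_combination this
    · have := hwv d; rw [gda, gdb, gkd, ← huv, ← h2] at this; linear_combination this
  -- an outside vertex adjacent to the path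
  obtain ⟨k0, hk0⟩ := exists_not_mem_four hn a b e d
  obtain ⟨x, hx, k, hk, hxk⟩ := exists_boundary hG {a, b, e, d} (a := a) (by simp) hk0
  have hC : 2 * (gramM c p q a a + gramM c p q d d) = gramM c p q a a * gramM c p q d d := by
    rcases out k hk with ⟨huv, h1, h2, h3⟩ | h
    · exfalso
      have hsym := sym k hk huv h1 h2
      have hxk1 := SimpleGraph.dist_eq_one_iff_adj.2 hxk.symm
      have tri := hG.dist_triangle (u := a) (v := k) (w := d)
      rw [SimpleGraph.dist_comm (u := a) (v := k)] at tri
      simp only [Finset.mem_insert, Finset.mem_singleton] at hx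
      have hka : G.dist k a = 2 ∧ G.dist k b = 1 := by
        rcases hx with rfl | rfl | rfl | rfl <;> omega
      rw [hka.1, hka.2] at hsym
      push_cast at hsym
      nlinarith
    · exact h.1
  have tb : gramM c p q b b = 2 := by
    have : gramM c p q a a * (gramM c p q b b - 2) = 0 := by
      linear_combination ft2 + (gramM c p q b b - 1) * hC
    rcases mul_eq_zero.1 this with h | h <;> linarith
  have te : gramM c p q e e = 2 := by
    have : gramM c p q d d * (gramM c p q e e - 2) = 0 := by
      linear_combination ft3 + (gramM c p q e e - 1) * hC
    rcases mul_eq_zero.1 this with h | h <;> linarith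
  have hsum : ∀ k, (G.dist a k : ℝ) + G.dist d k - G.dist b k - G.dist e k =
      (if k = b then 2 else 0) + (if k = e then 2 else 0) := by
    intro k
    have cda := SimpleGraph.dist_comm (G := G) (u := d) (v := a)
    have cba := SimpleGraph.dist_comm (G := G) (u := b) (v := a)
    have cea := SimpleGraph.dist_comm (G := G) (u := e) (v := a)
    have ceb := SimpleGraph.dist_comm (G := G) (u := e) (v := b)
    have cdb := SimpleGraph.dist_comm (G := G) (u := d) (v := b)
    have cde := SimpleGraph.dist_comm (G := G) (u := d) (v := e)
    by_cases hk : k ∈ ({a, b, e, d} : Finset (Fin n))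
    · simp only [Finset.mem_insert, Finset.mem_singleton] at hk
      rcases hk with rfl | rfl | rfl | rfl
      · simp [nab, nae, cda, cba, cea, had, hab1, hae] <;> norm_num
      · simp [nbe, ceb, cdb, hab1, hbd, hbe1] <;> norm_num
      · simp [nbe.symm, cde, hae, hbe1, hed] <;> norm_num
      · simp [nbd.symm, ned.symm, had, hbd, hed] <;> norm_num
    · have hk' := hk
      simp only [Finset.mem_insert, Finset.mem_singleton, not_or] at hk'
      simp only [hk'.2.1, hk'.2.2.1, if_false]
      rw [SimpleGraph.dist_comm (u := a), SimpleGraph.dist_comm (u := b),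
        SimpleGraph.dist_comm (u := e), SimpleGraph.dist_comm (u := d)]
      rcases out k hk with ⟨huv, h1, h2, h3⟩ | ⟨-, h1, h2⟩
      · exfalso
        have hsym := sym k hk huv h1 h2
        have hu4 : gramM c p q a a = 4 := by
          rw [← huv] at hC
          have : gramM c p q a a * (gramM c p q a a - 4) = 0 := by linear_combination - hC
          rcases mul_eq_zero.1 this with h | h <;> linarith
        rw [hu4] at hsym
        have : (4 : ℝ) * G.dist k b = 6 := by linear_combination hsym
        have : 4 * G.dist k b = 6 := by exact_mod_cast this
        omega
      · rw [h1, h2]; ring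
  have htot := Finset.sum_congr rfl (fun k (_ : k ∈ Finset.univ) => hsum k)
  simp only [Finset.sum_sub_distrib, Finset.sum_add_distrib, rowa, rowb, rowe, rowd,
    Finset.sum_ite_eq', Finset.mem_univ, if_true, tb, te] at htot
  linarith

end

/-! ## Part 4: the constant is below two -/

section
variable {n : ℕ} {G : SimpleGraph (Fin n)} {c : ℝ} {p q : Fin n → ℝ}

lemma PlaneRep.of_adj (R : PlaneRep G c p q) {i j : Fin n} (h : G.Adj i j) :
    gramM c p q i j = 1 := by
  rw [R.gram_eq h.ne, SimpleGraph.dist_eq_one_iff_adj.2 h]; simp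

lemma PlaneRep.dist_of_not_adj (R : PlaneRep G c p q) (hn : 5 ≤ n) (hG : G.Connected)
    {i j : Fin n} (hij : i ≠ j) (h : ¬ G.Adj i j) : G.dist i j = 2 := by
  have h1 := R.diam hn hG i j
  have h2 := hG.pos_dist_of_ne hij
  have h3 : G.dist i j ≠ 1 := fun h' => h (SimpleGraph.dist_eq_one_iff_adj.1 h')
  omega

lemma PlaneRep.of_not_adj (R : PlaneRep G c p q) (hn : 5 ≤ n) (hG : G.Connected)
    {i j : Fin n} (hij : i ≠ j) (h : ¬ G.Adj i j) : gramM c p q i j = 2 := by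
  rw [R.gram_eq hij, R.dist_of_not_adj hn hG hij h]; simp

lemma PlaneRep.lt_two (R : PlaneRep G c p q) (hn : 5 ≤ n) (hG : G.Connected) : c < 2 := by
  by_contra hc
  push Not at hc
  have hI : ∀ i j, i ≠ j → p i * p j + q i * q j ≤ 0 := by
    intro i j hij
    have h1 := R.gram_eq hij
    have h2 : (G.dist i j : ℝ) ≤ 2 := by exact_mod_cast R.diam hn hG i j
    unfold gramM at h1
    linarith
  have hpos : 0 < n := by omega
  let l : Fin n := ⟨0, hpos⟩
  have hl := R.norm_pos hn hG l
  have hinj : Set.InjOn (fun i => SignType.sign (p l * q i - q l * p i))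
      ((Finset.univ.erase l : Finset (Fin n)) : Set (Fin n)) := by
    intro j hj k hk hjk
    by_contra hne
    have hjl : l ≠ j := by rintro rfl; simp at hj
    have hkl : l ≠ k := by rintro rfl; simp at hk
    have i1 := hI l j hjl
    have i2 := hI l k hkl
    have i3 := hI j k hne
    have nj := R.norm_pos hn hG j
    have nk := R.norm_pos hn hG k
    have id : (p l ^ 2 + q l ^ 2) * (p j * p k + q j * q k) =
      (p l * p j + q l * q j) * (p l * p k + q l * q k) +
      (p l * q j - q l * p j) * (p l * q k - q l * p k) := by ring
    have idj : (p l ^ 2 + q l ^ 2) * (p j ^ 2 + q j ^ 2) =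
      (p l * p j + q l * q j) ^ 2 + (p l * q j - q l * p j) ^ 2 := by ring
    have idk : (p l ^ 2 + q l ^ 2) * (p k ^ 2 + q k ^ 2) =
      (p l * p k + q l * q k) ^ 2 + (p l * q k - q l * p k) ^ 2 := by ring
    have m1 : (p l ^ 2 + q l ^ 2) * (p j * p k + q j * q k) ≤ 0 :=
      mul_nonpos_of_nonneg_of_nonpos hl.le i3
    have m2 := mul_pos hl nj
    have m3 := mul_pos hl nk
    simp only at hjk
    generalize p l * q j - q l * p j = u at *
    generalize p l * q k - q l * p k = v at *
    generalize p l * p j + q l * q j = r at *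
    generalize p l * p k + q l * q k = s at *
    have rs := mul_nonneg_of_nonpos_of_nonpos i1 i2
    rcases lt_trichotomy u 0 with hu | hu | hu
    · rw [sign_neg hu, eq_comm, sign_eq_neg_one_iff] at hjk
      nlinarith [mul_pos_of_neg_of_neg hu hjk]
    · rw [hu, sign_zero, eq_comm, sign_eq_zero_iff] at hjk
      rw [hu, hjk] at id
      rw [hu] at idj
      rw [hjk] at idk
      have : r * s = 0 := by linarith
      rcases mul_eq_zero.1 this with h | h
      · rw [h] at idj; linarith
      · rw [h] at idk; linarith
    · rw [sign_pos hu, eq_comm, sign_eq_one_iff] at hjk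
      nlinarith [mul_pos hu hjk]
  have := Finset.card_le_card_of_injOn (t := (Finset.univ : Finset SignType)) _
    (fun i _ => by simp) hinj
  rw [Finset.card_erase_of_mem (Finset.mem_univ _)] at this
  have h3 : (Finset.univ : Finset SignType).card = 3 := rfl
  rw [h3] at this
  simp at this
  omega

/-! ## Part 5: induced paths on four vertices -/

lemma path_core {ra rb re rd za zb ze zd : ℝ} (ha : 0 < ra) (hb : 0 < rb) (he : 0 < re)
    (hd : 0 < rd) (hz : ¬ (za = 0 ∧ zb = 0 ∧ ze = 0 ∧ zd = 0)) (hs : za + zb + ze + zd = 0)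
    (e1 : ra * za + zb = 0) (e2 : za + rb * zb + ze = 0) (e3 : zb + re * ze + zd = 0)
    (e4 : ze + rd * zd = 0) :
    za ≠ 0 ∧ zb ≠ 0 ∧ ze ≠ 0 ∧ zd ≠ 0 ∧ (1 - ra) * za + (1 - rd) * zd = 0 := by
  have h1 : za ≠ 0 := by
    rintro rfl
    have hb0 : zb = 0 := by linarith
    subst hb0
    have he0 : ze = 0 := by linarith
    subst he0
    exact hz ⟨rfl, rfl, rfl, by linarith⟩
  have h4 : zd ≠ 0 := by
    rintro rfl
    have he0 : ze = 0 := by linarith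
    subst he0
    have hb0 : zb = 0 := by linarith
    subst hb0
    exact hz ⟨by linarith, rfl, rfl, rfl⟩
  refine ⟨h1, ?_, ?_, h4, by linear_combination hs - e1 - e4⟩
  · rintro rfl
    have : ra * za = 0 := by linarith
    rcases mul_eq_zero.1 this with h | h
    · linarith
    · exact h1 h
  · rintro rfl
    have : rd * zd = 0 := by linarith
    rcases mul_eq_zero.1 this with h | h
    · linarith
    · exact h4 h

/-- `a - b - e - d` is an induced path in the complement of `G`. -/
structure CoPath (G : SimpleGraph (Fin n)) (a b e d : Fin n) : Prop where
  nab : a ≠ b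
  nbe : b ≠ e
  ned : e ≠ d
  ab : ¬ G.Adj a b
  be : ¬ G.Adj b e
  ed : ¬ G.Adj e d
  ae : G.Adj a e
  ad : G.Adj a d
  bd : G.Adj b d

lemma PlaneRep.val (R : PlaneRep G c p q) (hn : 5 ≤ n) (hG : G.Connected)
    {i j : Fin n} (hij : i ≠ j) :
    (G.Adj i j ∧ gramM c p q i j = 1) ∨ (¬ G.Adj i j ∧ gramM c p q i j = 2) := by
  by_cases h : G.Adj i j
  · exact Or.inl ⟨h, R.of_adj h⟩
  · exact Or.inr ⟨h, R.of_not_adj hn hG hij h⟩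

lemma PlaneRep.path_out (R : PlaneRep G c p q) (hn : 5 ≤ n) (hG : G.Connected) {a b e d : Fin n}
    (P : CoPath G a b e d) {v : Fin n} (va : v ≠ a) (vb : v ≠ b) (ve : v ≠ e) (vd : v ≠ d) :
    ((G.Adj v a ↔ G.Adj v b) ∧ (G.Adj v e ↔ G.Adj v d) ∧ gramM c p q a a = 2) ∨
    (¬ G.Adj v a ∧ G.Adj v b ∧ G.Adj v e ∧ ¬ G.Adj v d ∧
      (gramM c p q a a - 1) ^ 2 - (gramM c p q a a - 1) - 1 = 0) := by
  have hc := R.one_lt hn hG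
  have gab := R.of_not_adj hn hG P.nab P.ab
  have gbe := R.of_not_adj hn hG P.nbe P.be
  have ged := R.of_not_adj hn hG P.ned P.ed
  have gae := R.of_adj P.ae
  have gad := R.of_adj P.ad
  have gbd := R.of_adj P.bd
  have gba := gab; rw [gram_comm] at gba
  have geb := gbe; rw [gram_comm] at geb
  have gde := ged; rw [gram_comm] at gde
  have gea := gae; rw [gram_comm] at gea
  have gda := gad; rw [gram_comm] at gda
  have gdb := gbd; rw [gram_comm] at gdb
  have la := R.lt_gram hn hG a
  have lb := R.lt_gram hn hG b
  have le := R.lt_gram hn hG e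
  have ld := R.lt_gram hn hG d
  have core : ∀ z1 z2 z3 z4 : ℝ, ¬ (z1 = 0 ∧ z2 = 0 ∧ z3 = 0 ∧ z4 = 0) → z1 + z2 + z3 + z4 = 0 →
      (∀ v, z1 * gramM c p q v a + z2 * gramM c p q v b + z3 * gramM c p q v e +
        z4 * gramM c p q v d = 0) → _ := fun z1 z2 z3 z4 h0 hs hv =>
    path_core (ra := gramM c p q a a - 1) (rb := gramM c p q b b - 1) (re := gramM c p q e e - 1)
      (rd := gramM c p q d d - 1) (by linarith) (by linarith) (by linarith) (by linarith) h0 hs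
      (by have := hv a; rw [gab, gae, gad] at this; linear_combination this - hs)
      (by have := hv b; rw [gba, gbe, gbd] at this; linear_combination this - hs)
      (by have := hv e; rw [gea, geb, ged] at this; linear_combination this - hs)
      (by have := hv d; rw [gda, gdb, gde] at this; linear_combination this - hs)
  obtain ⟨z1, z2, z3, z4, h0, hs, hv⟩ := kernelM c p q a b e d
  obtain ⟨y1, y2, y3, y4, hy⟩ := core z1 z2 z3 z4 h0 hs hv
  have hva := hv a; rw [gab, gae, gad] at hva
  have hvb := hv b; rw [gba, gbe, gbd] at hvb
  have hve := hv e; rw [gea, geb, ged] at hve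
  have hvv := hv v
  have noteq : ¬ (gramM c p q v a = gramM c p q v b ∧ gramM c p q v b = gramM c p q v e) := by
    rintro ⟨h1, h2⟩
    obtain ⟨y1, y2, y3, hy0, hys, hyv⟩ := equidist (c := c) (a := a) (b := b) (e := e)
        (R.norm_pos hn hG v) h1 h2
    obtain ⟨-, -, -, h, -⟩ := core y1 y2 y3 0
        (fun h => hy0 ⟨h.1, h.2.1, h.2.2.1⟩) (by linarith) (fun v => by linarith [hyv v])
    exact h rfl
  -- the two consequences
  have c1 : z1 + z2 = 0 → gramM c p q a a = 2 := by
    intro h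
    have : (gramM c p q a a - 2) * z1 = 0 := by linear_combination hva - hs - h
    linarith [(mul_eq_zero.1 this).resolve_right y1]
  have c2 : z1 + z4 = 0 → gramM c p q a a = gramM c p q d d := by
    intro h
    have : (gramM c p q a a - gramM c p q d d) * z1 = 0 := by
      linear_combination - hy + (2 - gramM c p q d d) * h
    linarith [(mul_eq_zero.1 this).resolve_right y1]
  obtain ⟨w1, w2, w4, wk, hw0, hws, hwv⟩ := kernelM c p q a b d v
  have hwa := hwv a; rw [gab, gad, gram_comm c p q a v] at hwa
  have hwe := hwv e; rw [gea, geb, ged, gram_comm c p q e v] at hwe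
  have hwd := hwv d; rw [gda, gdb, gram_comm c p q d v] at hwd
  rcases R.val hn hG va with ⟨k1, g1⟩ | ⟨k1, g1⟩ <;> rcases R.val hn hG vb with ⟨k2, g2⟩ | ⟨k2, g2⟩ <;>
  rcases R.val hn hG ve with ⟨k3, g3⟩ | ⟨k3, g3⟩ <;> rcases R.val hn hG vd with ⟨k4, g4⟩ | ⟨k4, g4⟩ <;>
  rw [g1, g2, g3, g4] at hvv <;> rw [g1] at hwa <;> rw [g3] at hwe <;> rw [g4] at hwd <;>
  first
  | (exfalso; exact noteq ⟨g1.trans g2.symm, g2.trans g3.symm⟩)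
  | (exfalso; apply y1; linarith)
  | (exfalso; apply y2; linarith)
  | (exfalso; apply y3; linarith)
  | (exfalso; apply y4; linarith)
  | (have h12 : z1 + z2 = 0 := by linarith
     left; exact ⟨by simp [k1, k2], by simp [k3, k4], c1 h12⟩)
  | (exfalso
     have h13 : z1 + z3 = 0 := by linarith
     have h13' : (gramM c p q b b - 1) * z2 = 0 := by linear_combination hvb - hs - h13
     rcases mul_eq_zero.1 h13' with h | h
     · linarith
     · exact y2 h)
  | (have h14 : z1 + z4 = 0 := by linarith
     have hr := c2 h14
     exfalso
     have hk1 := k1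
     have hk2 := k2
     have : w4 = 0 := by
       have : (gramM c p q d d - 1) * w4 = 0 := by linear_combination hwd - hws
       rcases mul_eq_zero.1 this with h | h
       · linarith
       · exact h
     subst this
     have h1 : w1 = 0 := by linarith
     subst h1
     have h2 : w2 = 0 := by linarith
     subst h2
     exact hw0 ⟨rfl, rfl, rfl, by linarith⟩)
  | (have h14 : z1 + z4 = 0 := by linarith
     have hr := c2 h14
     right
     refine ⟨k1, k2, k3, k4, ?_⟩
     have e2 : w2 = - w4 := by linear_combination hwe - hws
     have ek : wk = - w1 := by linear_combination hws - e2
     have e1 : w1 = (gramM c p q a a - 1) * w4 := by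
       rw [← hr] at hwd; linear_combination - hwd + 2 * ek + e2
     have hw4 : w4 ≠ 0 := by
       rintro rfl
       have h1 : w1 = 0 := by linarith
       exact hw0 ⟨h1, by linarith, rfl, by linarith⟩
     have : ((gramM c p q a a - 1) ^ 2 - (gramM c p q a a - 1) - 1) * w4 = 0 := by
       linear_combination hwa - hws - e2 - ek - (gramM c p q a a - 2) * e1
     exact (mul_eq_zero.1 this).resolve_right hw4)

end

/-- `G` is the blow-up of the relation `S` with class sizes `sz`. -/
def Blow {n k : ℕ} (G : SimpleGraph (Fin n)) (S : Fin k → Fin k → Prop) (sz : Fin k → ℕ) : Prop :=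
  ∃ τ : Fin n → Fin k, (∀ i j, G.Adj i j ↔ S (τ i) (τ j)) ∧
    ∀ x, (Finset.univ.filter (fun i => τ i = x)).card = sz x

/-- The pentagon. -/
def pentS (x y : Fin 5) : Prop := y = x + 2 ∨ x = y + 2

lemma Blow.iso {n k : ℕ} {G H : SimpleGraph (Fin n)} {S : Fin k → Fin k → Prop} {sz : Fin k → ℕ}
    (hG : Blow G S sz) (hH : Blow H S sz) : Nonempty (H ≃g G) := by
  obtain ⟨τ, h1, h2⟩ := hG
  obtain ⟨σ, h3, h4⟩ := hH
  have e : ∀ x, Nonempty ({i // σ i = x} ≃ {i // τ i = x}) := by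
    intro x
    rw [← Fintype.card_eq, Fintype.card_subtype, Fintype.card_subtype, h2, h4]
  let f : Fin n ≃ Fin n := (Equiv.sigmaFiberEquiv σ).symm.trans
    ((Equiv.sigmaCongrRight (fun x => (e x).some)).trans (Equiv.sigmaFiberEquiv τ))
  have hf : ∀ i, τ (f i) = σ i := by
    intro i
    exact ((e (σ i)).some ⟨i, rfl⟩).2
  refine ⟨⟨f, ?_⟩⟩
  intro i j
  rw [h1, h3, hf, hf]

section
variable {n : ℕ} {G : SimpleGraph (Fin n)} {c : ℝ} {p q : Fin n → ℝ}

lemma PlaneRep.pentagon (R : PlaneRep G c p q) (hn : 5 ≤ n) (hG : G.Connected) {a b e d : Fin n}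
    (P : CoPath G a b e d) :
    n = 5 ∧ Blow G pentS (fun _ => 1) ∧ ((n * c - n) - 2) ^ 2 = ((n * c - n) - 2) + 1 := by
  have hc := R.one_lt hn hG
  by_cases hex : ∃ v, v ≠ a ∧ v ≠ b ∧ v ≠ e ∧ v ≠ d ∧ ¬ G.Adj v a ∧ G.Adj v b ∧ G.Adj v e ∧
      ¬ G.Adj v d ∧ (gramM c p q a a - 1) ^ 2 - (gramM c p q a a - 1) - 1 = 0
  · obtain ⟨v, va, vb, ve, vd, k1, k2, k3, k4, hr⟩ := hex
    have P' : CoPath G v a b e := ⟨va, P.nab, P.nbe, k1, P.ab, P.be, k2, k3, P.ae⟩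
    have hrv : (gramM c p q v v - 1) ^ 2 - (gramM c p q v v - 1) - 1 = 0 := by
      rcases R.path_out hn hG P' vd.symm P.ad.ne.symm P.bd.ne.symm P.ned.symm with h | h
      · exact absurd (h.1.2 P.ad.symm) (fun h => k4 h.symm)
      · exact h.2.2.2.2
    have hall : ∀ w, w = v ∨ w = a ∨ w = b ∨ w = e ∨ w = d := by
      intro w
      by_contra hw
      push Not at hw
      obtain ⟨wv, wa, wb, we, wd⟩ := hw
      rcases R.path_out hn hG P wa wb we wd with h | h
      · rw [h.2.2] at hr; norm_num at hr
      · rcases R.path_out hn hG P' wv wa wb we with h' | h'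
        · rw [h'.2.2] at hrv; norm_num at hrv
        · exact h.1 h'.2.1
    have hn5 : n = 5 := by
      have h1 : (Finset.univ : Finset (Fin n)) ⊆ {v, a, b, e, d} := by
        intro x _; simpa using hall x
      have h2 := Finset.card_le_card h1
      have h3 := Finset.card_le_five (a := v) (b := a) (c := b) (d := e) (e := d)
      simp at h2
      omega
    have ab := P.ab
    have be := P.be
    have ed := P.ed
    have ae := P.ae
    have ad := P.ad
    have bd := P.bd
    let f : Fin 5 → Fin n := ![v, a, b, e, d]
    have hsurj : Function.Surjective f := by
      intro w
      rcases hall w with rfl | rfl | rfl | rfl | rfl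
      · exact ⟨0, rfl⟩
      · exact ⟨1, rfl⟩
      · exact ⟨2, rfl⟩
      · exact ⟨3, rfl⟩
      · exact ⟨4, rfl⟩
    have hbij : Function.Bijective f :=
      (Fintype.bijective_iff_surjective_and_card f).2 ⟨hsurj, by simp [hn5]⟩
    let F := Equiv.ofBijective f hbij
    have hadj : ∀ x y, G.Adj (f x) (f y) ↔ pentS x y := by
      intro x y
      have r1 : ¬ G.Adj a v := fun h => k1 h.symm
      have r2 : ¬ G.Adj d v := fun h => k4 h.symm
      have r3 : ¬ G.Adj b a := fun h => ab h.symm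
      have r4 : ¬ G.Adj e b := fun h => be h.symm
      have r5 : ¬ G.Adj d e := fun h => ed h.symm
      fin_cases x <;> fin_cases y <;>
        simp [f, pentS, ab, be, ed, ae, ad, bd, ae.symm, ad.symm, bd.symm, k1, k2, k3, k4, k2.symm,
          k3.symm, r1, r2, r3, r4, r5]
    refine ⟨hn5, ⟨F.symm, ?_, ?_⟩, ?_⟩
    · intro i j
      rw [← hadj]
      change _ ↔ G.Adj (F (F.symm i)) (F (F.symm j))
      simp
    · intro x
      rw [Finset.card_eq_one]
      refine ⟨F x, ?_⟩
      ext i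
      simp [Equiv.symm_apply_eq]
    · have row := R.row a
      rw [← F.sum_comp] at row
      have hF : ∀ x, F x = f x := fun x => rfl
      simp only [hF] at row
      rw [Fin.sum_univ_five] at row
      simp only [f] at row
      have d1 := R.dist_of_not_adj hn hG va.symm (fun h => k1 h.symm)
      have d2 := R.dist_of_not_adj hn hG P.nab P.ab
      have d3 := SimpleGraph.dist_eq_one_iff_adj.2 P.ae
      have d4 := SimpleGraph.dist_eq_one_iff_adj.2 P.ad
      simp [d1, d2, d3, d4] at row
      have : (n : ℝ) = 5 := by exact_mod_cast hn5
      rw [this] at row ⊢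
      have hg : gramM c p q a a = 5 * c - 6 := by linarith
      rw [hg] at hr
      linear_combination hr
  · exfalso
    push Not at hex
    have hout : ∀ v, v ≠ a → v ≠ b → v ≠ e → v ≠ d →
        ((G.Adj v a ↔ G.Adj v b) ∧ (G.Adj v e ↔ G.Adj v d) ∧ gramM c p q a a = 2) := by
      intro v va vb ve vd
      rcases R.path_out hn hG P va vb ve vd with h | h
      · exact h
      · exact absurd h.2.2.2.2 (hex v va vb ve vd h.1 h.2.1 h.2.2.1 h.2.2.2.1)
    have ra := R.row a
    have rb := R.row b
    have lb := R.lt_gram hn hG b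
    have key : ∀ j, (G.dist b j : ℝ) - G.dist a j = (if j = a then 2 else 0)
        - (if j = b then 2 else 0) + (if j = e then 1 else 0) := by
      intro j
      have dab := R.dist_of_not_adj hn hG P.nab P.ab
      have dba := dab
      rw [SimpleGraph.dist_comm] at dba
      have dbe := R.dist_of_not_adj hn hG P.nbe P.be
      have dae := SimpleGraph.dist_eq_one_iff_adj.2 P.ae
      have dad := SimpleGraph.dist_eq_one_iff_adj.2 P.ad
      have dbd := SimpleGraph.dist_eq_one_iff_adj.2 P.bd
      by_cases ja : j = a
      · subst ja; simp [P.nab, P.ae.ne, dba]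
      by_cases jb : j = b
      · subst jb; simp [P.nab.symm, P.nbe, dab]
      by_cases je : j = e
      · subst je; simp [P.ae.ne.symm, P.nbe.symm, dbe, dae]; norm_num
      by_cases jd : j = d
      · subst jd; simp [P.ad.ne.symm, P.bd.ne.symm, P.ned.symm, dbd, dad]
      have h := (hout j ja jb je jd).1
      have : G.dist b j = G.dist a j := by
        by_cases hh : G.Adj j a
        · rw [SimpleGraph.dist_eq_one_iff_adj.2 hh.symm,
            SimpleGraph.dist_eq_one_iff_adj.2 (h.1 hh).symm]
        · rw [R.dist_of_not_adj hn hG (Ne.symm ja) (fun h => hh h.symm),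
            R.dist_of_not_adj hn hG (Ne.symm jb) (fun h' => hh (h.2 h'.symm))]
      simp [ja, jb, je, this]
    have htot := Finset.sum_congr rfl (fun k (_ : k ∈ Finset.univ) => key k)
    simp only [Finset.sum_sub_distrib, Finset.sum_add_distrib, ra, rb,
      Finset.sum_ite_eq', Finset.mem_univ, if_true] at htot
    obtain ⟨v, hv⟩ := exists_not_mem_four hn a b e d
    simp only [Finset.mem_insert, Finset.mem_singleton, not_or] at hv
    have := (hout v hv.1 hv.2.1 hv.2.2.1 hv.2.2.2).2.2
    linarith

end

section
variable {n : ℕ} {G : SimpleGraph (Fin n)} {c : ℝ} {p q : Fin n → ℝ}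

/-! ## Part 6: without induced paths, the graph is a join -/

lemma PlaneRep.no_cosquare (R : PlaneRep G c p q) (hn : 5 ≤ n) (hG : G.Connected) {a b e d : Fin n}
    (nab : a ≠ b) (nbe : b ≠ e) (ned : e ≠ d) (nda : a ≠ d) (ab : ¬ G.Adj a b) (be : ¬ G.Adj b e)
    (ed : ¬ G.Adj e d) (da : ¬ G.Adj a d) (ae : G.Adj a e) (bd : G.Adj b d) : False := by
  have hc := R.one_lt hn hG
  have hc2 := R.lt_two hn hG
  have gab := R.of_not_adj hn hG nab ab
  have gbe := R.of_not_adj hn hG nbe be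
  have ged := R.of_not_adj hn hG ned ed
  have gad := R.of_not_adj hn hG nda da
  have gae := R.of_adj ae
  have gbd := R.of_adj bd
  have hl := R.norm_pos hn hG a
  unfold gramM at *
  have iab : 0 < p a * p b + q a * q b := by linarith
  have iad : 0 < p a * p d + q a * q d := by linarith
  have iae : p a * p e + q a * q e < 0 := by linarith
  have ibe : 0 < p b * p e + q b * q e := by linarith
  have ide : 0 < p e * p d + q e * q d := by linarith
  have ibd : p b * p d + q b * q d < 0 := by linarith
  have e1 : (p a ^ 2 + q a ^ 2) * (p b * p e + q b * q e) =
      (p a * p b + q a * q b) * (p a * p e + q a * q e) +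
      (p a * q b - q a * p b) * (p a * q e - q a * p e) := by ring
  have e2 : (p a ^ 2 + q a ^ 2) * (p e * p d + q e * q d) =
      (p a * p d + q a * q d) * (p a * p e + q a * q e) +
      (p a * q d - q a * p d) * (p a * q e - q a * p e) := by ring
  have e3 : (p a ^ 2 + q a ^ 2) * (p b * p d + q b * q d) =
      (p a * p b + q a * q b) * (p a * p d + q a * q d) +
      (p a * q b - q a * p b) * (p a * q d - q a * p d) := by ring
  have m1 := mul_pos hl ibe
  have m2 := mul_pos hl ide
  have m3 := mul_neg_of_pos_of_neg hl ibd
  have m4 := mul_neg_of_pos_of_neg iab iae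
  have m5 := mul_neg_of_pos_of_neg iad iae
  have m6 := mul_pos iab iad
  generalize p a * q b - q a * p b = u at *
  generalize p a * q d - q a * p d = v at *
  generalize p a * q e - q a * p e = w at *
  have k1 : 0 < u * w := by linarith
  have k2 : 0 < v * w := by linarith
  have k3 : u * v < 0 := by linarith
  nlinarith [mul_pos k1 k2, sq_nonneg w]

lemma PlaneRep.join (R : PlaneRep G c p q) (hn : 5 ≤ n) (hG : G.Connected)
    (hP : ∀ a b e d, ¬ CoPath G a b e d) :
    ∃ X : Fin n → Prop, (∃ a, X a) ∧ (∃ b, ¬ X b) ∧ ∀ a b, X a → ¬ X b → G.Adj a b := by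
  classical
  have : Nonempty (Fin n) := ⟨⟨0, by omega⟩⟩
  obtain ⟨v, -, hv⟩ := Finset.exists_max_image (Finset.univ : Finset (Fin n))
    (fun v => (Finset.univ.filter (fun w => ¬ G.Adj v w)).card) Finset.univ_nonempty
  refine ⟨fun w => ¬ G.Adj v w, ⟨v, G.irrefl⟩, ?_, ?_⟩
  · obtain ⟨j, hj⟩ := exists_nbr hn hG v
    exact ⟨j, by simpa using hj⟩
  · intro u w hu hw
    by_contra huw
    simp only [not_not] at hw
    have huv : u ≠ v := by rintro rfl; exact huw hw
    have hne : u ≠ w := by rintro rfl; exact hu hw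
    obtain ⟨y, hy1, hy2⟩ : ∃ y, ¬ G.Adj v y ∧ G.Adj u y := by
      by_contra hcon
      push Not at hcon
      have hss : Finset.univ.filter (fun w => ¬ G.Adj v w) ⊂
          Finset.univ.filter (fun w => ¬ G.Adj u w) := by
        rw [Finset.ssubset_iff_of_subset]
        · exact ⟨w, by simpa using huw, by simpa using hw⟩
        · intro y hy
          simp only [Finset.mem_filter, Finset.mem_univ, true_and] at hy ⊢
          exact hcon y hy
      have h1 := Finset.card_lt_card hss
      have h2 := hv u (Finset.mem_univ _)
      omega
    have hyv : y ≠ v := by rintro rfl; exact hu hy2.symm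
    have hyw : y ≠ w := by rintro rfl; exact hy1 hw
    by_cases hadj : G.Adj y w
    · exact hP y v u w ⟨hyv, huv.symm, hne, fun h => hy1 h.symm, hu, huw, hy2.symm, hadj, hw⟩
    · exact R.no_cosquare hn hG hyv huv.symm hne hyw (fun h => hy1 h.symm) hu huw hadj hy2.symm hw

/-! ## Part 7: one side is constant -/

/-- The representation is constant on `A`. -/
def ConstOn (p q : Fin n → ℝ) (A : Fin n → Prop) : Prop :=
  ∀ i j, A i → A j → p i = p j ∧ q i = q j

lemma PlaneRep.const_or (R : PlaneRep G c p q) (hn : 5 ≤ n) (hG : G.Connected) {X : Fin n → Prop}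
    (hX : ∀ a b, X a → ¬ X b → G.Adj a b) : ConstOn p q X ∨ ConstOn p q (fun i => ¬ X i) := by
  by_contra hcon
  have hc := R.one_lt hn hG
  push Not at hcon
  obtain ⟨h1, h2⟩ := hcon
  unfold ConstOn at h1 h2
  push Not at h1 h2
  obtain ⟨a, a', ha, ha', hne⟩ := h1
  obtain ⟨b, b', hb, hb', hne'⟩ := h2
  have g1 := R.of_adj (hX a b ha hb)
  have g2 := R.of_adj (hX a b' ha hb')
  have g3 := R.of_adj (hX a' b ha' hb)
  have g4 := R.of_adj (hX a' b' ha' hb')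
  unfold gramM at *
  have w0 : ¬ (p b - p b' = 0 ∧ q b - q b' = 0) := by
    rintro ⟨r1, r2⟩
    exact hne' (by linarith) (by linarith)
  have w1 : ¬ (p a - p a' = 0 ∧ q a - q a' = 0) := by
    rintro ⟨r1, r2⟩
    exact hne (by linarith) (by linarith)
  have hdet := det2 (A := p a) (B := q a) (C := p a - p a') (D := q a - q a') w0
    (by linear_combination g1 - g2) (by linear_combination g1 - g2 - g3 + g4)
  have e : ((p a - p a') ^ 2 + (q a - q a') ^ 2) * (p a * p b + q a * q b) = 0 := by
    have i1 : p b * (p a - p a') + q b * (q a - q a') = 0 := by linear_combination g1 - g3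
    linear_combination (p a * (p a - p a') + q a * (q a - q a')) * i1 -
      ((p a - p a') * q b - (q a - q a') * p b) * hdet
  rcases mul_eq_zero.1 e with h | h
  · apply w1
    constructor <;> nlinarith [sq_nonneg (p a - p a'), sq_nonneg (q a - q a')]
  · linarith

open Classical in
/-- Number of non-neighbours (including the vertex). -/
noncomputable def conum (G : SimpleGraph (Fin n)) (i : Fin n) : ℕ :=
  (Finset.univ.filter (fun j => ¬ G.Adj i j)).card

lemma PlaneRep.gram_conum (R : PlaneRep G c p q) (hn : 5 ≤ n) (hG : G.Connected) (i : Fin n) :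
    gramM c p q i i = (n * c - n) + 2 - conum G i := by
  classical
  have h : ∀ j, (G.dist i j : ℝ) = 1 + (if ¬ G.Adj i j then 1 else 0) - (if i = j then 2 else 0) := by
    intro j
    by_cases hij : i = j
    · subst hij; simp; norm_num
    · by_cases hadj : G.Adj i j
      · simp [hij, hadj, SimpleGraph.dist_eq_one_iff_adj.2 hadj]
      · simp [hij, hadj, R.dist_of_not_adj hn hG hij hadj]; norm_num
  have row := R.row i
  rw [Finset.sum_congr rfl (fun j _ => h j)] at row
  simp only [Finset.sum_sub_distrib, Finset.sum_add_distrib, Finset.sum_ite_eq, Finset.mem_univ,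
    if_true, Finset.sum_boole] at row
  have : conum G i = (Finset.univ.filter (fun j => ¬ G.Adj i j)).card := by
    unfold conum; congr
  rw [this]
  simp only [Finset.sum_const, Finset.card_univ, Fintype.card_fin, nsmul_eq_mul, mul_one] at row
  linarith

end

/-- Complete multipartite pattern. -/
def triS (x y : Fin 3) : Prop := x ≠ y

/-- A vertex class joined to the disjoint union of an edge and an independent set. -/
def capS (x y : Fin 4) : Prop :=
  (x = 0 ∧ y ≠ 0) ∨ (x ≠ 0 ∧ y = 0) ∨ (x = 1 ∧ y = 2) ∨ (x = 2 ∧ y = 1)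

/-- The possible shapes of the graph. -/
def Cls {n : ℕ} (G : SimpleGraph (Fin n)) (μ : ℝ) : Prop :=
  (∃ sz : Fin 3 → ℕ, Blow G triS sz ∧ ∀ x, sz x = 1 ∨ (sz x : ℝ) = μ) ∨
  (Blow G triS ![n - 2, 2, 0] ∧ μ = ((n - 2 : ℕ) : ℝ)) ∨
  (∃ r m : ℕ, 1 ≤ m ∧ Blow G capS ![r, 1, 1, m] ∧ μ = ((m + 2 : ℕ) : ℝ) ∧ (r = 1 ∨ (r : ℝ) = μ)) ∨
  (n = 5 ∧ Blow G pentS (fun _ => 1) ∧ (μ - 2) ^ 2 = (μ - 2) + 1)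

section
variable {n : ℕ} {G : SimpleGraph (Fin n)} {c : ℝ} {p q : Fin n → ℝ}

lemma conum_eq (i : Fin n) (P : Fin n → Prop) [DecidablePred P]
    (h : ∀ j, ¬ G.Adj i j ↔ P j) : conum G i = (Finset.univ.filter P).card := by
  unfold conum
  congr 1
  ext j
  simp [h]

lemma PlaneRep.cls_of_const (R : PlaneRep G c p q) (hn : 5 ≤ n) (hG : G.Connected)
    (A : Fin n → Prop) (hA : ConstOn p q A) {a0 b0 : Fin n} (ha0 : A a0) (hb0 : ¬ A b0)
    (hj : ∀ a b, A a → ¬ A b → G.Adj a b) : Cls G (n * c - n) := by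
  classical
  have hc := R.one_lt hn hG
  have hc2 := R.lt_two hn hG
  have hY := R.norm_pos hn hG a0
  have hcon := R.gram_conum hn hG
  set Y := p a0 ^ 2 + q a0 ^ 2 with hYdef
  obtain ⟨s, hs⟩ : ∃ s : Fin n → ℝ, ∀ i, s i = p a0 * q i - q a0 * p i := ⟨_, fun _ => rfl⟩
  have sA : ∀ i, A i → s i = 0 := by
    intro i hi
    rw [hs, (hA i a0 hi ha0).1, (hA i a0 hi ha0).2]; ring
  have ssum : ∑ i, s i = 0 := by
    simp only [hs, Finset.sum_sub_distrib, ← Finset.mul_sum, R.sp, R.sq]; simp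
  have prod : ∀ b b', ¬ A b → ¬ A b' → s b * s b' = Y * (gramM c p q b b' - c) - (c - 1) ^ 2 := by
    intro b b' hb hb'
    have h1 := R.of_adj (hj a0 b ha0 hb)
    have h2 := R.of_adj (hj a0 b' ha0 hb')
    unfold gramM at *
    rw [hs, hs, hYdef]
    have e1 : p a0 * p b + q a0 * q b = 1 - c := by linarith
    have e2 : p a0 * p b' + q a0 * q b' = 1 - c := by linarith
    linear_combination - (p a0 * p b' + q a0 * q b') * e1 - (1 - c) * e2
  have Aind : ∀ i j, A i → A j → ¬ G.Adj i j := by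
    intro i j hi hj' hadj
    have h := R.of_adj hadj
    have hp := R.norm_pos hn hG j
    unfold gramM at h
    rw [(hA i j hi hj').1, (hA i j hi hj').2] at h
    nlinarith
  have A2 : ∀ i j, A i → A j → i ≠ j → gramM c p q i i = 2 := by
    intro i j hi hj' hij
    rw [← R.of_not_adj hn hG hij (Aind i j hi hj')]
    unfold gramM
    rw [(hA i j hi hj').1, (hA i j hi hj').2]
  have s_ne : ∃ i, s i ≠ 0 := by
    by_contra hcon
    push Not at hcon
    have := R.ind (- q a0) (p a0) (fun i => by rw [← hcon i, hs]; ring)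
    rw [hYdef, this.2, neg_eq_zero.1 this.1] at hY
    norm_num at hY
  obtain ⟨u, hu⟩ : ∃ u, 0 < s u := by
    by_contra hcon
    push Not at hcon
    obtain ⟨i, hi⟩ := s_ne
    exact hi ((Finset.sum_eq_zero_iff_of_nonpos (fun i _ => hcon i)).1 ssum i (Finset.mem_univ _))
  obtain ⟨v, hv⟩ : ∃ v, s v < 0 := by
    by_contra hcon
    push Not at hcon
    obtain ⟨i, hi⟩ := s_ne
    exact hi ((Finset.sum_eq_zero_iff_of_nonneg (fun i _ => hcon i)).1 ssum i (Finset.mem_univ _))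
  have uA : ¬ A u := fun h => by rw [sA u h] at hu; exact lt_irrefl _ hu
  have vA : ¬ A v := fun h => by rw [sA v h] at hv; exact lt_irrefl _ hv
  have huv : u ≠ v := by rintro rfl; linarith
  have padj : ∀ b b', ¬ A b → ¬ A b' → G.Adj b b' → s b * s b' < 0 := by
    intro b b' hb hb' hadj
    rw [prod b b' hb hb', R.of_adj hadj]
    nlinarith
  have pnadj : ∀ b b', ¬ A b → ¬ A b' → b ≠ b' → ¬ G.Adj b b' →
      s b * s b' = Y * (2 - c) - (c - 1) ^ 2 := by
    intro b b' hb hb' hne hadj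
    rw [prod b b' hb hb', R.of_not_adj hn hG hne hadj]
  have tri : (∀ b, ¬ A b → s b ≠ 0) → (∀ b b', ¬ A b → ¬ A b' → b ≠ b' → 0 < s b * s b' →
      ¬ G.Adj b b') → (∀ b b', ¬ A b → ¬ A b' → b ≠ b' → s b * s b' < 0 →
      G.Adj b b') → Cls G (n * c - n) := by
    intro h0 hpos hneg
    left
    obtain ⟨τ, hτ⟩ : ∃ τ : Fin n → Fin 3, ∀ i, τ i = if A i then 0 else if 0 < s i then 1 else 2 :=
      ⟨_, fun _ => rfl⟩
    have hadj : ∀ i j, G.Adj i j ↔ τ i ≠ τ j := by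
      intro i j
      by_cases hij : i = j
      · subst hij; simp
      by_cases hi : A i
      · by_cases hj' : A j
        · simp [hτ, hi, hj', Aind i j hi hj']
        · simp only [hτ, hi, hj', hj i j hi hj', true_iff, if_true, if_false]
          split_ifs <;> decide
      · by_cases hj' : A j
        · simp only [hτ, hi, hj', (hj j i hj' hi).symm, true_iff, if_true, if_false]
          split_ifs <;> decide
        · rcases lt_or_gt_of_ne (h0 i hi) with h1 | h1 <;> rcases lt_or_gt_of_ne (h0 j hj') with h2 | h2
          · have := hpos i j hi hj' hij (mul_pos_of_neg_of_neg h1 h2)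
            simp [hτ, hi, hj', this, h1.not_gt, h2.not_gt]
          · have := hneg i j hi hj' hij (mul_neg_of_neg_of_pos h1 h2)
            simp [hτ, hi, hj', this, h1.not_gt, h2]
          · have := hneg i j hi hj' hij (mul_neg_of_pos_of_neg h1 h2)
            simp [hτ, hi, hj', this, h1, h2.not_gt]
          · have := hpos i j hi hj' hij (mul_pos h1 h2)
            simp [hτ, hi, hj', this, h1, h2]
    refine ⟨fun x => (Finset.univ.filter (fun i => τ i = x)).card, ⟨τ, hadj, fun x => rfl⟩, ?_⟩
    intro x
    by_cases h1 : (Finset.univ.filter (fun i => τ i = x)).card = 1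
    · exact Or.inl h1
    right
    have hne : (Finset.univ.filter (fun i => τ i = x)).Nonempty := by
      have t0 : τ a0 = 0 := by simp [hτ, ha0]
      have t1 : τ u = 1 := by simp [hτ, uA, hu]
      have t2 : τ v = 2 := by simp [hτ, vA, hv.not_gt]
      fin_cases x
      · exact ⟨a0, by simpa using t0⟩
      · exact ⟨u, by simpa using t1⟩
      · exact ⟨v, by simpa using t2⟩
    have hlt : 1 < (Finset.univ.filter (fun i => τ i = x)).card := by
      have := hne.card_pos; omega
    obtain ⟨i, hi, j, hj', hij⟩ := Finset.one_lt_card.1 hlt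
    simp only [Finset.mem_filter, Finset.mem_univ, true_and] at hi hj'
    have ci : conum G i = (Finset.univ.filter (fun i => τ i = x)).card :=
      conum_eq i _ (fun k => by rw [hadj, hi, not_not, eq_comm])
    have cj : conum G j = (Finset.univ.filter (fun i => τ i = x)).card :=
      conum_eq j _ (fun k => by rw [hadj, hj', not_not, eq_comm])
    have gi := hcon i
    have gj := hcon j
    rw [ci] at gi
    rw [cj] at gj
    have nadj : ¬ G.Adj i j := by rw [hadj, hi, hj']; simp
    suffices h2 : gramM c p q i i = 2 by linarith
    by_cases hAi : A i
    · by_cases hAj : A j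
      · exact A2 i j hAi hAj hij
      · exact absurd (hj i j hAi hAj) nadj
    · by_cases hAj : A j
      · exact absurd (hj j i hAj hAi).symm nadj
      · have e1 := prod i i hAi hAi
        have e2 := prod j j hAj hAj
        have e3 := pnadj i j hAi hAj hij nadj
        have e4 : 0 < s i * s j := by
          rcases lt_trichotomy (s i * s j) 0 with h | h | h
          · exact absurd (hneg i j hAi hAj hij h) nadj
          · rcases mul_eq_zero.1 h with h | h
            · exact absurd h (h0 i hAi)
            · exact absurd h (h0 j hAj)
          · exact h
        rw [gi] at e1
        rw [gj] at e2
        have e5 : (s i - s j) * (s i + s j) = 0 := by linear_combination e1 - e2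
        have e6 : s i = s j := by
          rcases mul_eq_zero.1 e5 with h | h
          · linarith
          · have : s i = - s j := by linarith
            rw [this] at e4
            nlinarith [sq_nonneg (s j)]
        have e7 : Y * (gramM c p q i i - 2) = 0 := by
          rw [gi]; rw [← e6] at e3; linear_combination e3 - e1
        rcases mul_eq_zero.1 e7 with h | h
        · linarith
        · linarith
  rcases lt_trichotomy (Y * (2 - c) - (c - 1) ^ 2) 0 with hP | hP | hP
  · -- only two vertices outside `A`
    have neg : ∀ b b', ¬ A b → ¬ A b' → b ≠ b' → s b * s b' < 0 := by
      intro b b' hb hb' hne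
      by_cases h : G.Adj b b'
      · exact padj b b' hb hb' h
      · rw [pnadj b b' hb hb' hne h]; exact hP
    have two : ∀ b, ¬ A b → b = u ∨ b = v := by
      intro b hb
      by_contra hcon
      push Not at hcon
      have h1 := neg b u hb uA hcon.1
      have h2 := neg b v hb vA hcon.2
      nlinarith
    by_cases hadj : G.Adj u v
    · apply tri
      · intro b hb
        rcases two b hb with rfl | rfl
        · exact hu.ne'
        · exact hv.ne
      · intro b b' hb hb' hne h
        exact absurd (neg b b' hb hb' hne) h.not_gt
      · intro b b' hb hb' hne h
        rcases two b hb with rfl | rfl <;> rcases two b' hb' with rfl | rfl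
        · exact absurd rfl hne
        · exact hadj
        · exact hadj.symm
        · exact absurd rfl hne
    · right; left
      have Aiff : ∀ i, ¬ A i ↔ i = u ∨ i = v := fun i => ⟨two i, by rintro (rfl | rfl) <;> assumption⟩
      have cB : (Finset.univ.filter (fun i => ¬ A i)).card = 2 := by
        rw [← Finset.card_pair huv]
        congr 1
        ext i; simp [Aiff]
      have cA : (Finset.univ.filter (fun i => A i)).card = n - 2 := by
        have h : (Finset.univ.filter (fun i => A i)).card +
            (Finset.univ.filter (fun i => ¬ A i)).card = n :=
          (Finset.card_filter_add_card_filter_not (s := (Finset.univ : Finset (Fin n))) A).trans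
            (by rw [Finset.card_univ, Fintype.card_fin])
        rw [cB] at h
        omega
      refine ⟨⟨fun i => if A i then 0 else 1, ?_, ?_⟩, ?_⟩
      · intro i j
        by_cases hij : i = j
        · subst hij; simp [triS]
        by_cases hi : A i <;> by_cases hj' : A j
        · simp [triS, hi, hj', Aind i j hi hj']
        · simp [triS, hi, hj', hj i j hi hj']
        · simp [triS, hi, hj', (hj j i hj' hi).symm]
        · simp only [triS, hi, hj', if_false, ne_eq, not_true_eq_false, iff_false]
          rcases two i hi with rfl | rfl <;> rcases two j hj' with rfl | rfl
          · exact absurd rfl hij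
          · exact hadj
          · exact fun h => hadj h.symm
          · exact absurd rfl hij
      · intro x
        fin_cases x
        · change (Finset.univ.filter (fun i => (if A i then 0 else 1 : Fin 3) = 0)).card = n - 2
          refine Eq.trans ?_ cA
          congr 1
          ext i; by_cases h : A i <;> simp [h]
        · change (Finset.univ.filter (fun i => (if A i then 0 else 1 : Fin 3) = 1)).card = 2
          refine Eq.trans ?_ cB
          congr 1
          ext i; by_cases h : A i <;> simp [h]
        · change (Finset.univ.filter (fun i => (if A i then 0 else 1 : Fin 3) = 2)).card = 0
          rw [Finset.card_eq_zero, Finset.filter_eq_empty_iff]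
          intro i _
          by_cases h : A i <;> simp [h]
      · have hlt : 1 < (Finset.univ.filter (fun i => A i)).card := by omega
        obtain ⟨i, hi, j, hj', hij⟩ := Finset.one_lt_card.1 hlt
        simp only [Finset.mem_filter, Finset.mem_univ, true_and] at hi hj'
        have ci : conum G i = n - 2 := by
          rw [← cA]
          refine conum_eq i _ (fun k => ⟨fun h => ?_, fun h => Aind i k hi h⟩)
          by_contra hk
          exact h (hj i k hi hk)
        have gi := hcon i
        rw [ci, A2 i j hi hj' hij] at gi
        linarith
  · -- zeros allowed
    have adj_of_ne : ∀ b b', ¬ A b → ¬ A b' → b ≠ b' → s b * s b' ≠ 0 → G.Adj b b' := by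
      intro b b' hb hb' hne h
      by_contra hadj
      exact h (by rw [pnadj b b' hb hb' hne hadj, hP])
    have hadj : G.Adj u v := adj_of_ne u v uA vA huv (mul_neg_of_pos_of_neg hu hv).ne
    have three : ∀ b, ¬ A b → b = u ∨ b = v ∨ s b = 0 := by
      intro b hb
      by_contra hcon
      push Not at hcon
      have h1 := padj b u hb uA (adj_of_ne b u hb uA hcon.1 (mul_ne_zero hcon.2.2 hu.ne'))
      have h2 := padj b v hb vA (adj_of_ne b v hb vA hcon.2.1 (mul_ne_zero hcon.2.2 hv.ne))
      nlinarith
    by_cases hZ : ∃ z, ¬ A z ∧ s z = 0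
    · right; right; left
      obtain ⟨z, zA, hz⟩ := hZ
      have znadj : ∀ b b', ¬ A b → ¬ A b' → s b = 0 → ¬ G.Adj b b' := by
        intro b b' hb hb' h0 h
        have := padj b b' hb hb' h
        rw [h0, zero_mul] at this
        exact lt_irrefl _ this
      obtain ⟨m, hm⟩ : ∃ m, m = (Finset.univ.filter (fun i => ¬ A i ∧ s i = 0)).card := ⟨_, rfl⟩
      have hm1 : 1 ≤ m := by
        rw [hm]; exact Finset.card_pos.2 ⟨z, by simp [zA, hz]⟩
      have cB : (Finset.univ.filter (fun i => ¬ A i)).card = m + 2 := by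
        have : Finset.univ.filter (fun i => ¬ A i) =
            insert u (insert v (Finset.univ.filter (fun i => ¬ A i ∧ s i = 0))) := by
          ext i
          simp only [Finset.mem_filter, Finset.mem_univ, true_and, Finset.mem_insert]
          constructor
          · intro h
            rcases three i h with h' | h' | h'
            · exact Or.inl h'
            · exact Or.inr (Or.inl h')
            · exact Or.inr (Or.inr ⟨h, h'⟩)
          · rintro (rfl | rfl | h)
            · exact uA
            · exact vA
            · exact h.1
        rw [this, Finset.card_insert_of_notMem, Finset.card_insert_of_notMem, ← hm]
        · simp [hv.ne]
        · simp [huv, hu.ne']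
      have hμ : (n : ℝ) * c - n = ((m + 2 : ℕ) : ℝ) := by
        have e1 := prod z z zA zA
        rw [hz] at e1
        have e2 : Y * (gramM c p q z z - 2) = 0 := by linear_combination - e1 - hP
        have e3 : gramM c p q z z = 2 := by
          rcases mul_eq_zero.1 e2 with h | h <;> linarith
        have cz : conum G z = m + 2 := by
          rw [← cB]
          refine conum_eq z _ (fun k => ⟨fun h hk => h (hj k z hk zA).symm, fun h => znadj z k zA h hz⟩)
        have gz := hcon z
        rw [cz, e3] at gz
        linarith
      refine ⟨(Finset.univ.filter (fun i => A i)).card, m, hm1, ?_, hμ, ?_⟩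
      · refine ⟨fun i => if A i then 0 else if i = u then 1 else if i = v then 2 else 3, ?_, ?_⟩
        · intro i j
          by_cases hi : A i
          · by_cases hj' : A j
            · simp [capS, hi, hj', Aind i j hi hj']
            · simp only [capS, hi, hj', hj i j hi hj', true_iff, if_true, if_false]
              split_ifs <;> simp
          · by_cases hj' : A j
            · simp only [capS, hi, hj', (hj j i hj' hi).symm, true_iff, if_true, if_false]
              split_ifs <;> simp
            · simp only [capS, hi, hj', if_false]
              rcases three i hi with h1 | h1 | h1
              · subst h1
                rcases three j hj' with h2 | h2 | h2
                · subst h2; simp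
                · subst h2; simp [huv.symm, hadj]
                · have : ¬ G.Adj i j := fun h => znadj j i hj' hi h2 h.symm
                  have n1 : j ≠ i := by rintro rfl; linarith
                  have n2 : j ≠ v := by rintro rfl; linarith
                  simp [n1, n2, this]
              · subst h1
                rcases three j hj' with h2 | h2 | h2
                · subst h2; simp [huv.symm, hadj.symm]
                · subst h2; simp [huv.symm]
                · have : ¬ G.Adj i j := fun h => znadj j i hj' hi h2 h.symm
                  have n1 : j ≠ i := by rintro rfl; linarith
                  have n2 : j ≠ u := by rintro rfl; linarith
                  simp [n1, n2, this, huv.symm]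
              · have : ¬ G.Adj i j := znadj i j hi hj' h1
                have n1 : i ≠ u := by rintro rfl; linarith
                have n2 : i ≠ v := by rintro rfl; linarith
                simp only [n1, n2, this, false_iff, if_false]
                split_ifs <;> simp
        · intro x
          fin_cases x
          · change (Finset.univ.filter (fun i => (if A i then 0 else if i = u then 1 else if i = v then 2 else 3 : Fin 4) = 0)).card = (Finset.univ.filter (fun i => A i)).card
            congr 1
            ext i
            by_cases h : A i
            · simp [h]
            · simp only [Finset.mem_filter, Finset.mem_univ, true_and, h, if_false, iff_false]
              split_ifs <;> simp
          · change (Finset.univ.filter (fun i => (if A i then 0 else if i = u then 1 else if i = v then 2 else 3 : Fin 4) = 1)).card = 1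
            rw [Finset.card_eq_one]
            refine ⟨u, ?_⟩
            ext i
            by_cases h : A i
            · have : i ≠ u := by rintro rfl; exact uA h
              simp [h, this]
            · simp only [Finset.mem_filter, Finset.mem_univ, true_and, h, if_false,
                Finset.mem_singleton]
              split_ifs with h1 h2 <;> simp [h1]
          · change (Finset.univ.filter (fun i => (if A i then 0 else if i = u then 1 else if i = v then 2 else 3 : Fin 4) = 2)).card = 1
            rw [Finset.card_eq_one]
            refine ⟨v, ?_⟩
            ext i
            by_cases h : A i
            · have : i ≠ v := by rintro rfl; exact vA h
              simp [h, this]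
            · simp only [Finset.mem_filter, Finset.mem_univ, true_and, h, if_false,
                Finset.mem_singleton]
              split_ifs with h1 h2
              · subst h1; simp [huv]
              · simp [h2]
              · simp [h2]
          · change (Finset.univ.filter (fun i => (if A i then 0 else if i = u then 1 else if i = v then 2 else 3 : Fin 4) = 3)).card = m
            rw [hm]
            congr 1
            ext i
            by_cases h : A i
            · simp [h]
            · simp only [Finset.mem_filter, Finset.mem_univ, true_and, h, if_false,
                not_false_eq_true]
              split_ifs with h1 h2
              · subst h1; simp [hu.ne']
              · subst h2; simp [hv.ne]
              · simp only [true_iff]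
                rcases three i h with h' | h' | h'
                · exact absurd h' h1
                · exact absurd h' h2
                · exact h'
      · by_cases h1 : (Finset.univ.filter (fun i => A i)).card = 1
        · exact Or.inl h1
        right
        have hne : (Finset.univ.filter (fun i => A i)).Nonempty := ⟨a0, by simpa using ha0⟩
        have hlt : 1 < (Finset.univ.filter (fun i => A i)).card := by
          have := hne.card_pos; omega
        obtain ⟨i, hi, j, hj', hij⟩ := Finset.one_lt_card.1 hlt
        simp only [Finset.mem_filter, Finset.mem_univ, true_and] at hi hj'
        have ci : conum G i = (Finset.univ.filter (fun i => A i)).card := by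
          refine conum_eq i _ (fun k => ⟨fun h => ?_, fun h => Aind i k hi h⟩)
          by_contra hk
          exact h (hj i k hi hk)
        have gi := hcon i
        rw [ci, A2 i j hi hj' hij] at gi
        linarith
    · push Not at hZ
      apply tri hZ
      · intro b b' hb hb' hne h hadj'
        exact absurd (padj b b' hb hb' hadj') h.not_gt
      · intro b b' hb hb' hne h
        exact adj_of_ne b b' hb hb' hne h.ne
  · have cas : ∀ b b', ¬ A b → ¬ A b' → b ≠ b' →
        (G.Adj b b' ∧ s b * s b' < 0) ∨ (¬ G.Adj b b' ∧ 0 < s b * s b') := by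
      intro b b' hb hb' hne
      by_cases h : G.Adj b b'
      · exact Or.inl ⟨h, padj b b' hb hb' h⟩
      · exact Or.inr ⟨h, by rw [pnadj b b' hb hb' hne h]; exact hP⟩
    apply tri
    · intro b hb h0
      have hbu : b ≠ u := by rintro rfl; linarith
      rcases cas b u hb uA hbu with h | h
      · rw [h0, zero_mul] at h; exact lt_irrefl _ h.2
      · rw [h0, zero_mul] at h; exact lt_irrefl _ h.2
    · intro b b' hb hb' hne h
      rcases cas b b' hb hb' hne with h' | h'
      · linarith [h'.2]
      · exact h'.1
    · intro b b' hb hb' hne h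
      rcases cas b b' hb hb' hne with h' | h'
      · exact h'.1
      · linarith [h'.2]

theorem PlaneRep.cls (R : PlaneRep G c p q) (hn : 5 ≤ n) (hG : G.Connected) :
    Cls G (n * c - n) := by
  by_cases hP : ∃ a b e d, CoPath G a b e d
  · obtain ⟨a, b, e, d, P⟩ := hP
    exact Or.inr (Or.inr (Or.inr (R.pentagon hn hG P)))
  · push Not at hP
    obtain ⟨X, ⟨a, ha⟩, ⟨b, hb⟩, hX⟩ := R.join hn hG hP
    rcases R.const_or hn hG hX with h | h
    · exact R.cls_of_const hn hG X h ha hb hX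
    · exact R.cls_of_const hn hG (fun i => ¬ X i) h hb (not_not.2 ha)
        (fun i j hi hj => (hX j i (not_not.1 hj) hi).symm)

end

section
variable {n : ℕ} {G H : SimpleGraph (Fin n)} {c : ℝ} {p q : Fin n → ℝ}

lemma Blow.sum {k : ℕ} {S : Fin k → Fin k → Prop} {sz : Fin k → ℕ} (h : Blow G S sz) :
    ∑ x, sz x = n := by
  obtain ⟨τ, -, h2⟩ := h
  have := Finset.card_eq_sum_card_fiberwise (s := (Finset.univ : Finset (Fin n)))
    (t := (Finset.univ : Finset (Fin k))) (f := τ) (fun _ _ => Finset.mem_coe.2 (Finset.mem_univ _))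
  rw [Finset.card_univ, Fintype.card_fin] at this
  rw [this]
  exact Finset.sum_congr rfl fun x _ => (h2 x).symm

lemma Blow.perm {sz sz' : Fin 3 → ℕ} (h : Blow G triS sz) (π : Equiv.Perm (Fin 3))
    (hs : ∀ x, sz' x = sz (π x)) : Blow G triS sz' := by
  obtain ⟨τ, h1, h2⟩ := h
  refine ⟨fun i => π.symm (τ i), fun i j => ?_, fun x => ?_⟩
  · rw [h1]; simp [triS]
  · rw [hs, ← h2]
    congr 1
    ext i
    simp [Equiv.symm_apply_eq]

lemma Blow.swap01 {a b d : ℕ} (h : Blow G triS ![a, b, d]) : Blow G triS ![b, a, d] := by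
  refine h.perm (Equiv.swap 0 1) ?_
  intro x; fin_cases x <;> rfl

lemma Blow.swap12 {a b d : ℕ} (h : Blow G triS ![a, b, d]) : Blow G triS ![a, d, b] := by
  refine h.perm (Equiv.swap 1 2) ?_
  intro x; fin_cases x <;> rfl

lemma tri_normal (hn : 5 ≤ n) {μ : ℝ} {sz : Fin 3 → ℕ} (h : Blow G triS sz)
    (hs : ∀ x, sz x = 1 ∨ (sz x : ℝ) = μ) : ∃ m : ℕ, μ = m ∧
      ((Blow G triS ![m, 1, 1] ∧ n = m + 2) ∨ (Blow G triS ![m, m, 1] ∧ n = 2 * m + 1) ∨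
        (Blow G triS ![m, m, m] ∧ n = 3 * m)) := by
  have hsum := h.sum
  obtain ⟨a, b, d, rfl⟩ : ∃ a b d, sz = ![a, b, d] :=
    ⟨sz 0, sz 1, sz 2, by ext x; fin_cases x <;> rfl⟩
  have ha : a = 1 ∨ (a : ℝ) = μ := hs 0
  have hb : b = 1 ∨ (b : ℝ) = μ := hs 1
  have hd : d = 1 ∨ (d : ℝ) = μ := hs 2
  rw [Fin.sum_univ_three] at hsum
  change a + b + d = n at hsum
  rcases ha with rfl | rfl
  · rcases hb with rfl | rfl
    · rcases hd with rfl | rfl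
      · omega
      · exact ⟨d, rfl, Or.inl ⟨h.swap12.swap01, by omega⟩⟩
    · rcases hd with rfl | hd
      · exact ⟨b, rfl, Or.inl ⟨h.swap01, by omega⟩⟩
      · obtain rfl : d = b := by exact_mod_cast hd
        exact ⟨d, rfl, Or.inr (Or.inl ⟨h.swap01.swap12, by omega⟩)⟩
  · rcases hb with rfl | hb
    · rcases hd with rfl | hd
      · exact ⟨a, rfl, Or.inl ⟨h, by omega⟩⟩
      · obtain rfl : d = a := by exact_mod_cast hd
        exact ⟨d, rfl, Or.inr (Or.inl ⟨h.swap12, by omega⟩)⟩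
    · obtain rfl : b = a := by exact_mod_cast hb
      rcases hd with rfl | hd
      · exact ⟨b, rfl, Or.inr (Or.inl ⟨h, by omega⟩)⟩
      · obtain rfl : d = b := by exact_mod_cast hd
        exact ⟨d, rfl, Or.inr (Or.inr ⟨h, by omega⟩)⟩

lemma Blow.sum_conum {sz : Fin 3 → ℕ} (h : Blow G triS sz) :
    ∑ i, conum G i = ∑ x, sz x * sz x := by
  obtain ⟨τ, h1, h2⟩ := h
  have e : ∀ i, conum G i = sz (τ i) := by
    intro i
    rw [← h2]
    exact conum_eq i _ (fun k => by rw [h1, triS, not_not, eq_comm])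
  simp only [e]
  rw [← Finset.sum_fiberwise (s := (Finset.univ : Finset (Fin n))) (g := τ)]
  refine Finset.sum_congr rfl fun x _ => ?_
  rw [Finset.sum_congr rfl (g := fun _ => sz x)
    (fun i hi => by rw [(Finset.mem_filter.1 hi).2]), Finset.sum_const, smul_eq_mul, h2]

lemma PlaneRep.trace (R : PlaneRep G c p q) (hn : 5 ≤ n) (hG : G.Connected) :
    (distLaplacian G).trace = n * (n - 2) + ((∑ i, conum G i : ℕ) : ℝ) := by
  have : ∀ i, (distLaplacian G).diag i = (n - 2 : ℝ) + conum G i := by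
    intro i
    have e : (distLaplacian G).diag i = ∑ j, (G.dist i j : ℝ) := by
      simp [distLaplacian, Matrix.diag]
    rw [e, R.row, R.gram_conum hn hG]; ring
  unfold Matrix.trace
  rw [Finset.sum_congr rfl fun i _ => this i, Finset.sum_add_distrib]
  simp
  ring

/-- normalised shapes -/
def Shape {n : ℕ} (G : SimpleGraph (Fin n)) (m : ℕ) : Prop :=
  (Blow G triS ![m, 1, 1] ∧ n = m + 2) ∨ (Blow G triS ![m, m, 1] ∧ n = 2 * m + 1) ∨
    (Blow G triS ![m, m, m] ∧ n = 3 * m) ∨ (Blow G triS ![m, 2, 0] ∧ n = m + 2) ∨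
    (∃ k, Blow G capS ![1, 1, 1, k] ∧ m = k + 2 ∧ n = m + 1) ∨
    (∃ k, Blow G capS ![m, 1, 1, k] ∧ m = k + 2 ∧ n = 2 * m)

lemma Cls.shape (hn : 5 ≤ n) {μ : ℝ} (h : Cls G μ) :
    (∃ m : ℕ, μ = m ∧ Shape G m) ∨ (Blow G pentS (fun _ => 1) ∧ (μ - 2) ^ 2 = (μ - 2) + 1) := by
  rcases h with ⟨sz, h1, h2⟩ | ⟨h1, h2⟩ | ⟨r, m, hm, h1, h2, h3⟩ | ⟨-, h1, h2⟩
  · obtain ⟨m, hm, h | h | h⟩ := tri_normal hn h1 h2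
    · exact Or.inl ⟨m, hm, Or.inl h⟩
    · exact Or.inl ⟨m, hm, Or.inr (Or.inl h)⟩
    · exact Or.inl ⟨m, hm, Or.inr (Or.inr (Or.inl h))⟩
  · exact Or.inl ⟨n - 2, h2, Or.inr (Or.inr (Or.inr (Or.inl ⟨h1, by omega⟩)))⟩
  · have hs := h1.sum
    rw [Fin.sum_univ_four] at hs
    change r + 1 + 1 + m = n at hs
    refine Or.inl ⟨m + 2, h2, Or.inr (Or.inr (Or.inr (Or.inr ?_)))⟩
    rcases h3 with rfl | h3
    · exact Or.inl ⟨m, h1, rfl, by omega⟩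
    · rw [h2] at h3
      obtain rfl : r = m + 2 := by exact_mod_cast h3
      exact Or.inr ⟨m, h1, rfl, by omega⟩
  · exact Or.inr ⟨h1, h2⟩

lemma not_golden (m : ℕ) (h : ((m : ℝ) - 2) ^ 2 = ((m : ℝ) - 2) + 1) : False := by
  have h' : ((m : ℤ) - 2) ^ 2 = ((m : ℤ) - 2) + 1 := by exact_mod_cast h
  obtain ⟨k, hk⟩ : ∃ k : ℤ, k = (m : ℤ) - 2 := ⟨_, rfl⟩
  rw [← hk] at h'
  have h1 : k < 2 := by nlinarith
  have h2 : -1 < k := by nlinarith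
  interval_cases k <;> omega

lemma not_mixed {m : ℕ} (hc : ∑ i, conum G i = ∑ i, conum H i) (h1 : Blow G triS ![m, 1, 1])
    (h2 : Blow H triS ![m, 2, 0]) : False := by
  rw [h1.sum_conum, h2.sum_conum, Fin.sum_univ_three, Fin.sum_univ_three] at hc
  change m * m + 1 * 1 + 1 * 1 = m * m + 2 * 2 + 0 * 0 at hc
  omega

lemma Shape.iso (hn : 5 ≤ n) {m : ℕ} (hc : ∑ i, conum G i = ∑ i, conum H i)
    (hG : Shape G m) (hH : Shape H m) : Nonempty (H ≃g G) := by
  rcases hG with ⟨g, g'⟩ | ⟨g, g'⟩ | ⟨g, g'⟩ | ⟨g, g'⟩ | ⟨k, g, gk, g'⟩ | ⟨k, g, gk, g'⟩ <;>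
  rcases hH with ⟨h, h'⟩ | ⟨h, h'⟩ | ⟨h, h'⟩ | ⟨h, h'⟩ | ⟨l, h, hl, h'⟩ | ⟨l, h, hl, h'⟩ <;>
  first
  | exact g.iso h
  | (exfalso; omega)
  | exact (not_mixed hc g h).elim
  | exact (not_mixed hc.symm h g).elim
  | (obtain rfl : k = l := by omega
     exact g.iso h)

end

/-- Let `G` be a connected graph on `n ≥ 5` vertices whose largest distance
Laplacian eigenvalue has multiplicity `n - 3`. Then `G` is determined by its distance
Laplacian spectrum: any connected graph on `n` vertices with the same multiset of distance
Laplacian eigenvalues is isomorphic to `G`. -/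
theorem determined_by_distLaplacian_spectrum
    (n : ℕ) (hn : 5 ≤ n) (G : SimpleGraph (Fin n)) (hG : G.Connected)
    (hmult : eigMult (distLaplacian G) (lambdaMax (distLaplacian G)) = n - 3)
    (H : SimpleGraph (Fin n)) (hH : H.Connected)
    (hspec : (distLaplacian H).charpoly.roots = (distLaplacian G).charpoly.roots) :
    Nonempty (H ≃g G) := by
  have hch := charpoly_eq_of_roots (distLaplacian_isHermitian H) (distLaplacian_isHermitian G) hspec
  have hlam := lambdaMax_eq_of_charpoly hch
  have hmult' : eigMult (distLaplacian H) (lambdaMax (distLaplacian H)) = n - 3 := by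
    rw [hlam, eigMult_eq_of_charpoly (distLaplacian_isHermitian H)
      (distLaplacian_isHermitian G) hch, hmult]
  obtain ⟨p, q, R⟩ := exists_rep hn G hG hmult
  obtain ⟨p', q', R'⟩ := exists_rep hn H hH hmult'
  rw [hlam] at R'
  have hne : Nonempty (Fin n) := ⟨⟨0, by omega⟩⟩
  have htr : (distLaplacian G).trace = (distLaplacian H).trace := by
    rw [Matrix.trace_eq_neg_charpoly_coeff, Matrix.trace_eq_neg_charpoly_coeff, hch]
  have hc : ∑ i, conum G i = ∑ i, conum H i := by
    rw [R.trace hn hG, R'.trace hn hH] at htr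
    exact_mod_cast add_left_cancel htr
  rcases (R.cls hn hG).shape hn with ⟨m, hm, hS⟩ | ⟨hB, hg⟩ <;>
  rcases (R'.cls hn hH).shape hn with ⟨m', hm', hS'⟩ | ⟨hB', hg'⟩
  · obtain rfl : m = m' := by rw [hm] at hm'; exact_mod_cast hm'
    exact hS.iso hn hc hS'
  · rw [hm] at hg'
    exact (not_golden m hg').elim
  · rw [hm'] at hg
    exact (not_golden m' hg).elim
  · exact hB.iso hB'
end

section
/- For an even integer n ≥ 6, the distance Laplacian spectrum of the graph K_{n/2,n/2}+e is {(3n/2) with multiplicity n−3, 3n/2 − 2, n, 0}; the distance Laplacian spectrum of K_{2,n−2} is {(2n−2) with multiplicity n−3, n+2, n, 0} for every integer n ≥ 6; and the distance Laplacian spectrum of K_{1,n−1}+e is {(2n−1) with multiplicity n−3, 2n−3, n, 0} for every integer n ≥ 6. -/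
open Matrix

/-- The star `K_{1,k+2}` together with an extra edge joining two pendant vertices:
the centre is the `Unit` vertex, the pendant vertices are `Bool ⊕ Fin k`, and the extra
edge joins the two `Bool` pendant vertices.  (It has `k + 3` vertices.) -/
def starPlusEdge (k : ℕ) : SimpleGraph (Unit ⊕ Bool ⊕ Fin k) :=
  completeBipartiteGraph Unit (Bool ⊕ Fin k) ⊔
    SimpleGraph.fromEdgeSet {s(Sum.inr (Sum.inl false), Sum.inr (Sum.inl true))}

/-- The complete bipartite graph `K_{k+2,k+2}` together with an extra edge joining two
vertices on the same side (the two `Bool` vertices). -/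
def bipPlusEdge (k : ℕ) : SimpleGraph ((Bool ⊕ Fin k) ⊕ Fin (k + 2)) :=
  completeBipartiteGraph (Bool ⊕ Fin k) (Fin (k + 2)) ⊔
    SimpleGraph.fromEdgeSet {s(Sum.inl (Sum.inl false), Sum.inl (Sum.inl true))}

lemma aux_roots {V : Type*} [Fintype V] [DecidableEq V] (M : Matrix V V ℝ) (k : ℕ)
    (hk : Fintype.card V = k + 3) (a b z : V → ℝ) (c w11 w12 w22 w33 s t r e1 e2 e3 : ℝ)
    (haa : ∑ i, a i * a i = s) (hbb : ∑ i, b i * b i = t) (hzz : ∑ i, z i * z i = r)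
    (hab : ∑ i, a i * b i = 0) (haz : ∑ i, a i * z i = 0) (hbz : ∑ i, b i * z i = 0)
    (hM : ∀ i j, M i j = (if i = j then c else 0) + (w11 * a i * a j + w12 * (a i * b j + b i * a j)
      + w22 * b i * b j + w33 * z i * z j))
    (h1 : w11 * s + w22 * t = (e1 - c) + (e2 - c))
    (h2 : (w11 * w22 - w12 ^ 2) * (s * t) = (e1 - c) * (e2 - c))
    (h3 : w33 * r = e3 - c) :
    M.charpoly.roots = Multiset.replicate k c + {e3, e1, e2} := by
  classical
  let U : Matrix V (Fin 3) ℝ := Matrix.of fun i => ![a i, b i, z i]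
  let W : Matrix (Fin 3) V ℝ := Matrix.of ![fun j => w11 * a j + w12 * b j,
    fun j => w12 * a j + w22 * b j, fun j => w33 * z j]
  have hMU : M = U * W + Matrix.scalar V c := by
    ext i j
    rw [hM]
    simp [U, W, Matrix.mul_apply, Fin.sum_univ_three, Matrix.diagonal_apply]
    ring
  have hWU : W * U = !![w11 * s, w12 * t, 0; w12 * s, w22 * t, 0; 0, 0, w33 * r] := by
    have hba : ∑ i, b i * a i = 0 := by rw [← hab]; simp only [mul_comm]
    have hza : ∑ i, z i * a i = 0 := by rw [← haz]; simp only [mul_comm]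
    have hzb : ∑ i, z i * b i = 0 := by rw [← hbz]; simp only [mul_comm]
    ext i j
    fin_cases i <;> fin_cases j <;>
      simp [U, W, Matrix.mul_apply, add_mul, Finset.sum_add_distrib, mul_assoc, ← Finset.mul_sum,
        haa, hbb, hzz, hab, haz, hbz, hba, hza, hzb]
  have hcp : M.charpoly = (Polynomial.X - Polynomial.C c) ^ k *
      ((Polynomial.X - Polynomial.C e3) * ((Polynomial.X - Polynomial.C e1) *
        (Polynomial.X - Polynomial.C e2))) := by
    have h4 : (U * W).charpoly = Polynomial.X ^ k * (W * U).charpoly := by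
      rw [Matrix.charpoly_mul_comm_of_le _ _ (by rw [hk]; simp), hk]
      simp
    have h5 : (W * U).charpoly = (Polynomial.X - Polynomial.C (e3 - c)) *
      ((Polynomial.X - Polynomial.C (e1 - c)) * (Polynomial.X - Polynomial.C (e2 - c))) := by
      rw [hWU, Matrix.charpoly, Matrix.det_fin_three, ← h3]
      have h1' := congrArg Polynomial.C h1
      have h2' := congrArg Polynomial.C h2
      simp only [map_add, map_mul, map_sub, map_pow] at h1' h2'
      simp
      linear_combination (Polynomial.X - Polynomial.C w33 * Polynomial.C r) * 
        (h2' - Polynomial.X * h1')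
    have h6 : M.charpoly = (U * W).charpoly.comp (Polynomial.X - Polynomial.C c) := by
      have := Matrix.charpoly_sub_scalar M c
      rw [hMU, add_sub_cancel_right] at this
      rw [hMU, this, Polynomial.comp_assoc]
      simp
    rw [h6, h4, h5]
    simp
  rw [hcp]
  have hX : ∀ x : ℝ, (Polynomial.X - Polynomial.C x) ≠ 0 := Polynomial.X_sub_C_ne_zero
  rw [Polynomial.roots_mul (by simp [hX]), Polynomial.roots_mul (by simp [hX]),
    Polynomial.roots_mul (by simp [hX]), Polynomial.roots_pow]
  simp [Polynomial.roots_X_sub_C, Multiset.nsmul_singleton]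
  exact Multiset.cons_swap _ _ _

lemma aux_dist {V : Type*} [DecidableEq V] (G : SimpleGraph V) [DecidableRel G.Adj]
    (h : ∀ i j, i ≠ j → ¬ G.Adj i j → ∃ k, G.Adj i k ∧ G.Adj k j) (i j : V) :
    G.dist i j = if i = j then 0 else if G.Adj i j then 1 else 2 := by
  split_ifs with h1 h2
  · simp [h1]
  · exact SimpleGraph.dist_eq_one_iff_adj.2 h2
  · obtain ⟨k, hk1, hk2⟩ := h i j h1 h2
    let w : G.Walk i j := SimpleGraph.Walk.cons hk1 (SimpleGraph.Walk.cons hk2 SimpleGraph.Walk.nil)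
    have hle : G.dist i j ≤ 2 := SimpleGraph.dist_le w
    have h0 : G.dist i j ≠ 0 := by
      rw [Ne, w.reachable.dist_eq_zero_iff]; exact h1
    have h1' : G.dist i j ≠ 1 := by
      rw [Ne, SimpleGraph.dist_eq_one_iff_adj]; exact h2
    omega

/-- Distance Laplacian as `2n I - 2J - L` for graphs of diameter at most two. -/
lemma aux_lap {V : Type*} [Fintype V] [DecidableEq V] (G : SimpleGraph V) [DecidableRel G.Adj]
    (h : ∀ i j, i ≠ j → ¬ G.Adj i j → ∃ k, G.Adj i k ∧ G.Adj k j) (i j : V) :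
    distLaplacian G i j = if i = j then ∑ k, (2 - (if i = k then 2 else 0)
      - (if G.Adj i k then 1 else 0) : ℝ) else (if G.Adj i j then 1 else 0) - 2 := by
  simp only [distLaplacian, Matrix.of_apply, aux_dist G h]
  split_ifs with h1
  · refine Finset.sum_congr rfl fun k _ => ?_
    by_cases h3 : i = k
    · subst h3; simp
    · by_cases h4 : G.Adj i k <;> simp [h3, h4]; norm_num
  · norm_num
  · norm_num

lemma aux_K2 (m : ℕ) (hm : 4 ≤ m) :
    (distLaplacian (completeBipartiteGraph (Fin 2) (Fin m))).charpoly.roots =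
        Multiset.replicate (m - 1) (2 * (m : ℝ) + 2) + {(m : ℝ) + 4, (m : ℝ) + 2, 0} := by
  classical
  refine aux_roots _ (m - 1) (by simp; omega) (Sum.elim (fun _ => 1) (fun _ => 0))
    (Sum.elim (fun _ => 0) (fun _ => 1)) (Sum.elim ![1, -1] (fun _ => 0)) _
    (-2 - (m - 2) / 2) (-1) (-2) (-(m - 2) / 2) 2 m 2 _ _ _ ?_ ?_ ?_ ?_ ?_ ?_ ?_ ?_ ?_ ?_
  · simp
  · simp
  · simp; norm_num
  · simp
  · simp
  · simp
  · intro i j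
    rw [aux_lap]
    · simp only [Fintype.sum_sum_type]
      rcases i with i | i <;> rcases j with j | j
      · fin_cases i <;> fin_cases j <;> simp <;> ring
      · simp <;> norm_num
      · simp <;> norm_num
      · by_cases hij : i = j
        · subst hij; simp [Finset.sum_sub_distrib]; ring
        · simp [hij]
    · rintro (i | i) (j | j) h1 h2
      · exact ⟨Sum.inr ⟨0, by omega⟩, by simp, by simp⟩
      · simp at h2
      · simp at h2
      · exact ⟨Sum.inl 0, by simp, by simp⟩
  · ring
  · ring
  · ring

lemma star_adj (k : ℕ) (i j : Unit ⊕ Bool ⊕ Fin k) : (starPlusEdge k).Adj i j ↔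
    match i, j with
    | .inl _, .inl _ => False
    | .inl _, .inr _ => True
    | .inr _, .inl _ => True
    | .inr (.inl a), .inr (.inl b) => a ≠ b
    | .inr _, .inr _ => False := by
  rcases i with i | (i | i) <;> rcases j with j | (j | j) <;> simp [starPlusEdge]
  revert i j; decide

lemma bip_adj (k : ℕ) (i j : (Bool ⊕ Fin k) ⊕ Fin (k + 2)) : (bipPlusEdge k).Adj i j ↔
    match i, j with
    | .inr _, .inr _ => False
    | .inl _, .inr _ => True
    | .inr _, .inl _ => True
    | .inl (.inl a), .inl (.inl b) => a ≠ b
    | .inl _, .inl _ => False := by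
  rcases i with (i | i) | i <;> rcases j with (j | j) | j <;> simp [bipPlusEdge]
  revert i j; decide

lemma aux_star (k : ℕ) :
    (distLaplacian (starPlusEdge k)).charpoly.roots =
        Multiset.replicate k (2 * (k : ℝ) + 5) + {2 * (k : ℝ) + 3, (k : ℝ) + 3, 0} := by
  classical
  refine aux_roots _ k (by simp; omega) (Sum.elim (fun _ => 1) (fun _ => 0))
    (Sum.elim (fun _ => 0) (fun _ => 1))
    (Sum.elim (fun _ => 0) (Sum.elim (fun x => if x then 1 else -1) (fun _ => 0))) _
    (-2 - (k + 1)) (-1) (-2) (-1) 1 (k + 2) 2 _ _ _ ?_ ?_ ?_ ?_ ?_ ?_ ?_ ?_ ?_ ?_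
  · simp
  · simp; ring
  · simp; norm_num
  · simp
  · simp
  · simp
  · intro i j
    rw [aux_lap]
    · simp only [star_adj, Fintype.sum_sum_type]
      rcases i with i | (i | i) <;> rcases j with j | (j | j)
      · simp; ring
      · simp <;> norm_num
      · simp <;> norm_num
      · simp <;> norm_num
      · cases i <;> cases j <;> simp <;> ring
      · simp <;> norm_num
      · simp <;> norm_num
      · simp <;> norm_num
      · by_cases hij : i = j
        · subst hij; simp [Finset.sum_sub_distrib]; ring
        · simp [hij]
    · intro i j h1 h2
      refine ⟨Sum.inl (), ?_⟩
      simp only [star_adj] at h2 ⊢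
      rcases i with i | (i | i) <;> rcases j with j | (j | j) <;> simp_all
  · ring
  · ring
  · ring

lemma aux_bip (k : ℕ) :
    (distLaplacian (bipPlusEdge k)).charpoly.roots =
        Multiset.replicate (2 * k + 1) (3 * (k : ℝ) + 6) +
          {3 * (k : ℝ) + 4, 2 * (k : ℝ) + 4, 0} := by
  classical
  refine aux_roots _ (2 * k + 1) (by simp; omega) (Sum.elim (fun _ => 1) (fun _ => 0))
    (Sum.elim (fun _ => 0) (fun _ => 1))
    (Sum.elim (Sum.elim (fun x => if x then 1 else -1) (fun _ => 0)) (fun _ => 0)) _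
    (-2) (-1) (-2) (-1) (k + 2) (k + 2) 2 _ _ _ ?_ ?_ ?_ ?_ ?_ ?_ ?_ ?_ ?_ ?_
  · simp; ring
  · simp
  · simp; norm_num
  · simp
  · simp
  · simp
  · intro i j
    rw [aux_lap]
    · simp only [bip_adj, Fintype.sum_sum_type]
      rcases i with (i | i) | i <;> rcases j with (j | j) | j
      · cases i <;> cases j <;> simp <;> ring
      · simp <;> norm_num
      · simp <;> norm_num
      · simp <;> norm_num
      · by_cases hij : i = j
        · subst hij; simp [Finset.sum_sub_distrib]; ring
        · simp [hij]
      · simp <;> norm_num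
      · simp <;> norm_num
      · simp <;> norm_num
      · by_cases hij : i = j
        · subst hij; simp [Finset.sum_sub_distrib]; ring
        · simp [hij]
    · intro i j h1 h2
      simp only [bip_adj] at h2 ⊢
      rcases i with i | i
      · refine ⟨Sum.inr 0, ?_⟩
        rcases i with i | i <;> rcases j with (j | j) | j <;> simp_all
      · refine ⟨Sum.inl (Sum.inl true), ?_⟩
        rcases j with (j | j) | j <;> simp_all
  · ring
  · ring
  · ring

/-- For `n ≥ 6`: if `n` is even then the distance Laplacian spectrum of
`K_{n/2,n/2}+e` is `{(3n/2)^{n-3}, 3n/2 - 2, n, 0}`; the distance Laplacian spectrum of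
`K_{2,n-2}` is `{(2n-2)^{n-3}, n+2, n, 0}`; and the distance Laplacian spectrum of
`K_{1,n-1}+e` is `{(2n-1)^{n-3}, 2n-3, n, 0}`. -/
theorem distLaplacian_spectra_of_H1_graphs (n : ℕ) (hn : 6 ≤ n) :
    (Even n → (distLaplacian (bipPlusEdge (n / 2 - 2))).charpoly.roots =
        Multiset.replicate (n - 3) (3 * (n : ℝ) / 2) +
          {3 * (n : ℝ) / 2 - 2, (n : ℝ), 0}) ∧
    (distLaplacian (completeBipartiteGraph (Fin 2) (Fin (n - 2)))).charpoly.roots =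
        Multiset.replicate (n - 3) (2 * (n : ℝ) - 2) + {(n : ℝ) + 2, (n : ℝ), 0} ∧
    (distLaplacian (starPlusEdge (n - 3))).charpoly.roots =
        Multiset.replicate (n - 3) (2 * (n : ℝ) - 1) + {2 * (n : ℝ) - 3, (n : ℝ), 0} := by
  refine ⟨?_, ?_, ?_⟩
  · rintro ⟨p, rfl⟩
    obtain ⟨k, rfl⟩ : ∃ k, p = k + 2 := ⟨p - 2, by omega⟩
    have h1 : (k + 2 + (k + 2)) / 2 - 2 = k := by omega
    have h2 : k + 2 + (k + 2) - 3 = 2 * k + 1 := by omega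
    have e1 : 3 * ((k + 2 + (k + 2) : ℕ) : ℝ) / 2 = 3 * (k : ℝ) + 6 := by push_cast; ring
    have e2 : ((k + 2 + (k + 2) : ℕ) : ℝ) = 2 * (k : ℝ) + 4 := by push_cast; ring
    have e3 : 3 * (k : ℝ) + 6 - 2 = 3 * (k : ℝ) + 4 := by ring
    rw [h1, h2, aux_bip, e1, e2, e3]
  · obtain ⟨m, rfl⟩ : ∃ m, n = m + 2 := ⟨n - 2, by omega⟩
    have h2 : m + 2 - 3 = m - 1 := by omega
    have e1 : 2 * ((m + 2 : ℕ) : ℝ) - 2 = 2 * (m : ℝ) + 2 := by push_cast; ring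
    have e2 : ((m + 2 : ℕ) : ℝ) = (m : ℝ) + 2 := by push_cast; ring
    have e3 : (m : ℝ) + 2 + 2 = (m : ℝ) + 4 := by ring
    rw [Nat.add_sub_cancel, h2, aux_K2 m (by omega), e1, e2, e3]
  · obtain ⟨k, rfl⟩ : ∃ k, n = k + 3 := ⟨n - 3, by omega⟩
    have e1 : 2 * ((k + 3 : ℕ) : ℝ) - 1 = 2 * (k : ℝ) + 5 := by push_cast; ring
    have e2 : 2 * ((k + 3 : ℕ) : ℝ) - 3 = 2 * (k : ℝ) + 3 := by push_cast; ring
    have e3 : ((k + 3 : ℕ) : ℝ) = (k : ℝ) + 3 := by push_cast; ring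
    rw [Nat.add_sub_cancel, aux_star, e1, e2, e3]
end
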